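/- Let n be a positive integer and write 8n+19 = 3^β·n₁ with n₁ a positive integer not divisible by 3. Then t(1,3,3,12;n) = (1/2)·(3^β·(3/n₁) − 1)·Σ_{d | n₁} d·(3/d) + (1/2)·Σ ((−1)^((a−1)/2)·a + (−1)^((b−1)/2)·b), where (3/·) is the Kronecker symbol and the last sum is over all pairs (a,b) of positive integers with a and b both odd and 4(8n+19) = a² + 3b². -/

import Mathlib

/-!
Write `N = 8n + 19` and `X = 2x - 1`, `Y = 2y - 1`, `Z = 2z - 1`, `W = 2(2w - 1)`. Since `N ≡ 3`
modulo `8`, the quadruples counted by `tquad 1 3 3 12 n` correspond to the integer points of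
`X² + 3Y² + 3Z² + 3W² = N` with `X`, `Y`, `Z` odd; their number is `TT N`. Everything is elementary:
no modular forms are used. Let `χ = chi3 · chi4`, which agrees with `(3/·)` on odd numbers, and put
`E1 = ∑_{N = de} e χ(d)`, `E2 = ∑_{N = de} e χ(e)`, `DD = ∑_{X² + 3Z² = N} chi4(Z) Z`. The heart of the
matter is `TT_final`: `2 TT = E1 - E2 - DD`.

* Liouville's method. If `h` satisfies a suitable antisymmetry, the sum of `h` over the positive
  solutions of `ax + by = N` reduces to the diagonal `a = b` (`sum_Sol_hL`). For the function `hL`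
  the full sum is a convolution of the divisor sums `g3 = ∑ chi3(d)` and `g4 = ∑ chi4(d)`, and the
  diagonal is an elementary divisor sum; the resulting identity is `liouville`.
* Binary forms. The numbers of representations by `X² + Y²` and `X² + 3Y²` satisfy the same Hecke-type
  recursions as `g4` and `g3`, which gives `r1_eq` and `r3_all`.
* Convolving `X² + 3Y²` with `3(Z² + W²)` and using `liouville` gives `hh_eq`: the number of points
  with `X ≡ Y (mod 2)` is `2 (E1 - E2)`. Here two of the three pairs `(X, Y)`, `(X, Z)`, `(X, W)` agree
  modulo `2` at every point, so this number is also two thirds of the total.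
* Congruences modulo `8` give `hh = 2 (PP + TT)`, where `PP` counts the points with only `Z` odd
  (`hh_split`). Multiplication by `1 + √-3` gives `TT = 2 UU` (`TT_eq`), where `UU` counts the points
  with only `Z` odd and `W ≡ 2 (mod 4)`. Finally `PP - 2 UU` is a signed count of points, and it equals
  `DD` (`signed_eq`) by the identity `L3`: for `M ≡ 1 (mod 8)`,
  `∑ (-1)^k r₁(k) = ∑_{Z² = M} chi4(Z) Z`, where `Z` runs over the odd integers with `Z² ≤ M` on the left,
  `k = (M - Z²)/8`, and `r₁(k)` is the number of representations of `k` as a sum of two squares. The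
  identity `L3` is proved by sign-reversing involutions on the solutions of `y² + 4ef = M`.
* Multiplication by `1 + √-3` once more turns `-DD` into the sum over `4N = a² + 3b²` with `a`, `b` odd and
  positive (`pos_sum_eq`). As `χ` vanishes on multiples of `3`, `E1` and `E2` are multiples of
  `∑_{d ∣ n₁} d χ(d)` (`E1_eq`, `E2_eq`).
-/

open scoped BigOperators

/-- `Nquad a b c d n` is the number of quadruples `(x,y,z,w) ∈ ℤ⁴` with
`n = a*x^2 + b*y^2 + c*z^2 + d*w^2`. -/
noncomputable def Nquad (a b c d : ℕ) (n : ℕ) : ℕ :=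
  Nat.card {p : ℤ × ℤ × ℤ × ℤ //
    (n : ℤ) = a * p.1 ^ 2 + b * p.2.1 ^ 2 + c * p.2.2.1 ^ 2 + d * p.2.2.2 ^ 2}

/-- `tquad a b c d n` is the number of quadruples `(x,y,z,w) ∈ ℤ⁴` with
`n = a*x(x-1)/2 + b*y(y-1)/2 + c*z(z-1)/2 + d*w(w-1)/2`. -/
noncomputable def tquad (a b c d : ℕ) (n : ℕ) : ℕ :=
  Nat.card {p : ℤ × ℤ × ℤ × ℤ //
    (n : ℤ) = a * (p.1 * (p.1 - 1) / 2) + b * (p.2.1 * (p.2.1 - 1) / 2)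
      + c * (p.2.2.1 * (p.2.2.1 - 1) / 2) + d * (p.2.2.2 * (p.2.2.2 - 1) / 2)}

namespace Stmt15

/-! ### Liouville's identity -/

/-- The nontrivial character modulo `3`, that is `(-3/·)`. -/
def chi3 : ZMod 3 → ℤ := ![0, 1, -1]

/-- The nontrivial character modulo `4`, that is `(-4/·)`. -/
def chi4 : ZMod 4 → ℤ := ![0, 1, 0, -1]

/-- The weight `1 - [2 ∣ x] - 3 [4 ∣ x]` on residues modulo `4`. -/
def wt : ZMod 4 → ℤ := ![-3, 1, 0, 1]

/-- The indicator function of `0` modulo `3`. -/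
def z3 : ZMod 3 → ℤ := ![1, 0, 0]

/-- The indicator function of `0` modulo `4`. -/
def z4 : ZMod 4 → ℤ := ![1, 0, 0, 0]

/-- The indicator function of the even residues modulo `4`. -/
def ev : ZMod 4 → ℤ := ![1, 0, 1, 0]

/-- The indicator function of the odd residues modulo `4`. -/
def od : ZMod 4 → ℤ := ![0, 1, 0, 1]

/-- The cosine `cos(πx/2)` as a function of `x` modulo `4`. -/
def eps : ZMod 4 → ℤ := ![1, 0, -1, 0]

/-- The kernel from which `hL` is built, an even function on `ℤ⁴`. It does not depend on its last
argument, which is kept so that linear substitutions of `(a, b, x, y)` can be written uniformly. -/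
def K (a b x _y : ℤ) : ℤ :=
  chi3 (a : ZMod 3) * chi4 (b : ZMod 4) *
    (wt (x : ZMod 4) + 3 * z3 (b : ZMod 3) * z4 (a : ZMod 4))

/-- The alternating sum of `K` over the substitutions `1, ρ, …, ρ⁵`, where
`ρ (a, b, x, y) = (x, x + y, a - b, b)`. The map `ρ` preserves `ax + by` and satisfies `ρ⁶ = -1`. -/
def hL (a b x y : ℤ) : ℤ :=
  K a b x y - K x (x + y) (a - b) b + K (a - b) a (-y) (x + y) - K (-y) x (-b) a
    + K (-b) (a - b) (-x - y) x - K (-x - y) (-y) (-a) (a - b)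

lemma chi3_neg : ∀ a : ZMod 3, chi3 (-a) = -chi3 a := by decide
lemma chi4_neg : ∀ a : ZMod 4, chi4 (-a) = -chi4 a := by decide
lemma wt_neg : ∀ a : ZMod 4, wt (-a) = wt a := by decide
lemma z3_neg : ∀ a : ZMod 3, z3 (-a) = z3 a := by decide
lemma z4_neg : ∀ a : ZMod 4, z4 (-a) = z4 a := by decide

lemma K_neg (a b x y : ℤ) : K (-a) (-b) (-x) (-y) = K a b x y := by
  simp only [K, Int.cast_neg, chi3_neg, chi4_neg, wt_neg, z3_neg, z4_neg]
  ring

/-- The antisymmetry that drives Liouville's method; it uses only that `K` is even. -/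
lemma hL_antisymm (a b x y : ℤ) : hL (x + y) x b (a - b) = -hL b a y x := by
  have h1 := K_neg (x + y) x b (a - b)
  simp only [hL]
  rw [show -(x + y) = -y - x by ring, show -(a - b) = b - a by ring] at h1
  rw [show b + (a - b) = a by ring, show x + y - x = y by ring, show -(a - b) = b - a by ring,
    show -b - (a - b) = -a by ring, show -(x+y) = -x - y by ring, show -x - y = - y - x by ring,
    show y + x = x + y by ring, h1]
  ring

/-- The solutions `(a, b, x, y)` of `ax + by = N` in positive integers. -/
def Sol (N : ℕ) : Finset (ℕ × ℕ × ℕ × ℕ) :=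
  (Finset.range (N + 1) ×ˢ Finset.range (N + 1) ×ˢ Finset.range (N + 1) ×ˢ
    Finset.range (N + 1)).filter fun v =>
      0 < v.1 ∧ 0 < v.2.1 ∧ 0 < v.2.2.1 ∧ 0 < v.2.2.2 ∧ v.1 * v.2.2.1 + v.2.1 * v.2.2.2 = N

lemma mem_Sol {N a b x y : ℕ} :
    (a, b, x, y) ∈ Sol N ↔ 0 < a ∧ 0 < b ∧ 0 < x ∧ 0 < y ∧ a * x + b * y = N := by
  simp only [Sol, Finset.mem_filter, Finset.mem_product, Finset.mem_range]
  constructor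
  · rintro ⟨-, h⟩; exact h
  · rintro ⟨ha, hb, hx, hy, h⟩
    refine ⟨⟨?_, ?_, ?_, ?_⟩, ha, hb, hx, hy, h⟩ <;> nlinarith

lemma sum_Sol_swap (N : ℕ) (f : ℕ → ℕ → ℕ → ℕ → ℤ) :
    ∑ v ∈ Sol N, f v.1 v.2.1 v.2.2.1 v.2.2.2 = ∑ v ∈ Sol N, f v.2.1 v.1 v.2.2.2 v.2.2.1 := by
  refine Finset.sum_nbij' (fun v => (v.2.1, v.1, v.2.2.2, v.2.2.1))
    (fun v => (v.2.1, v.1, v.2.2.2, v.2.2.1)) ?_ ?_ ?_ ?_ ?_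
  · rintro ⟨a, b, x, y⟩ h
    rw [mem_Sol] at *; obtain ⟨ha, hb, hx, hy, h⟩ := h
    exact ⟨hb, ha, hy, hx, by rw [← h]; ring⟩
  · rintro ⟨a, b, x, y⟩ h
    rw [mem_Sol] at *; obtain ⟨ha, hb, hx, hy, h⟩ := h
    exact ⟨hb, ha, hy, hx, by rw [← h]; ring⟩
  all_goals simp

lemma sum_Sol_flip (N : ℕ) (f : ℕ → ℕ → ℕ → ℕ → ℤ) :
    ∑ v ∈ Sol N, f v.1 v.2.1 v.2.2.1 v.2.2.2 = ∑ v ∈ Sol N, f v.1 v.2.2.2 v.2.2.1 v.2.1 := by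
  refine Finset.sum_nbij' (fun v => (v.1, v.2.2.2, v.2.2.1, v.2.1))
    (fun v => (v.1, v.2.2.2, v.2.2.1, v.2.1)) ?_ ?_ ?_ ?_ ?_
  · rintro ⟨a, b, x, y⟩ h
    rw [mem_Sol] at *; obtain ⟨ha, hb, hx, hy, h⟩ := h
    exact ⟨ha, hy, hx, hb, by rw [← h]; ring⟩
  · rintro ⟨a, b, x, y⟩ h
    rw [mem_Sol] at *; obtain ⟨ha, hb, hx, hy, h⟩ := h
    exact ⟨ha, hy, hx, hb, by rw [← h]; ring⟩
  all_goals simp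

lemma sum_Sol_flip' (N : ℕ) (f : ℕ → ℕ → ℕ → ℕ → ℤ) :
    ∑ v ∈ Sol N, f v.1 v.2.1 v.2.2.1 v.2.2.2 = ∑ v ∈ Sol N, f v.2.2.1 v.2.1 v.1 v.2.2.2 := by
  rw [sum_Sol_swap N f, sum_Sol_flip N (fun a b x y => f b a y x),
    sum_Sol_swap N (fun a b x y => f y a b x)]

/-- Liouville's method: by `hL_antisymm` and the involution `(a, b, x, y) ↦ (x + y, x, b, a - b)` of
the solutions with `a > b`, these solutions cancel against those with `a < b`. -/
lemma sum_Sol_hL (N : ℕ) :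
    ∑ v ∈ Sol N, hL v.1 v.2.1 v.2.2.1 v.2.2.2 =
      ∑ v ∈ (Sol N).filter (fun v => v.1 = v.2.1), hL v.1 v.2.1 v.2.2.1 v.2.2.2 := by
  have h1 : ∑ v ∈ (Sol N).filter (fun v => v.2.1 < v.1), hL v.1 v.2.1 v.2.2.1 v.2.2.2 =
      - ∑ v ∈ (Sol N).filter (fun v => v.2.1 < v.1), hL v.2.1 v.1 v.2.2.2 v.2.2.1 := by
    rw [← Finset.sum_neg_distrib]
    refine Finset.sum_nbij' (fun v => (v.2.2.1 + v.2.2.2, v.2.2.1, v.2.1, v.1 - v.2.1))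
      (fun v => (v.2.2.1 + v.2.2.2, v.2.2.1, v.2.1, v.1 - v.2.1)) ?_ ?_ ?_ ?_ ?_
    · rintro ⟨a, b, x, y⟩ h
      simp only [Finset.mem_filter, mem_Sol] at *
      obtain ⟨⟨ha, hb, hx, hy, h⟩, hab⟩ := h
      obtain ⟨k, rfl⟩ := Nat.exists_eq_add_of_lt hab
      refine ⟨⟨by omega, hx, hb, by omega, ?_⟩, by omega⟩
      rw [← h, show b + k + 1 - b = k + 1 by omega]; ring
    · rintro ⟨a, b, x, y⟩ h
      simp only [Finset.mem_filter, mem_Sol] at *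
      obtain ⟨⟨ha, hb, hx, hy, h⟩, hab⟩ := h
      obtain ⟨k, rfl⟩ := Nat.exists_eq_add_of_lt hab
      refine ⟨⟨by omega, hx, hb, by omega, ?_⟩, by omega⟩
      rw [← h, show b + k + 1 - b = k + 1 by omega]; ring
    · rintro ⟨a, b, x, y⟩ h
      simp only [Finset.mem_filter, mem_Sol] at *
      simp only [Prod.mk.injEq, true_and]; omega
    · rintro ⟨a, b, x, y⟩ h
      simp only [Finset.mem_filter, mem_Sol] at *
      simp only [Prod.mk.injEq, true_and]; omega
    · rintro ⟨a, b, x, y⟩ h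
      simp only [Finset.mem_filter, mem_Sol] at *
      have := hL_antisymm (x + y) x b (a - b)
      rw [Nat.cast_sub h.2.le]
      push_cast
      rw [← this]
      congr 1 <;> ring
  have h2 : ∑ v ∈ (Sol N).filter (fun v => v.2.1 < v.1), hL v.2.1 v.1 v.2.2.2 v.2.2.1 =
      ∑ v ∈ (Sol N).filter (fun v => v.1 < v.2.1), hL v.1 v.2.1 v.2.2.1 v.2.2.2 := by
    rw [Finset.sum_filter, Finset.sum_filter]
    exact sum_Sol_swap N (fun a b x y => if b < a then hL b a y x else 0)
  rw [h2] at h1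
  have h3 : ∑ v ∈ Sol N, hL v.1 v.2.1 v.2.2.1 v.2.2.2 =
      ∑ v ∈ (Sol N).filter (fun v => v.2.1 < v.1), hL v.1 v.2.1 v.2.2.1 v.2.2.2 +
      ∑ v ∈ (Sol N).filter (fun v => v.1 < v.2.1), hL v.1 v.2.1 v.2.2.1 v.2.2.2 +
      ∑ v ∈ (Sol N).filter (fun v => v.1 = v.2.1), hL v.1 v.2.1 v.2.2.1 v.2.2.2 := by
    simp only [Finset.sum_filter]
    rw [← Finset.sum_add_distrib, ← Finset.sum_add_distrib]
    refine Finset.sum_congr rfl fun v _ => ?_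
    rcases lt_trichotomy v.1 v.2.1 with h | h | h
    · simp [h, h.not_gt, h.ne]
    · simp [h]
    · simp [h, h.not_gt, h.ne']
  rw [h3, h1]; ring

/-- A finite verification modulo `3` and `4`: the third and sixth terms of `hL`, after reflection. -/
lemma P2 (a b x y : ℤ) :
    K (b - a) b (-x) (x + y) - K (-a - b) (-b) (-x) (x - y) =
      chi3 a * chi4 b * ((1 - 3 * z3 b) * wt x - 3 * z3 b * od a) := by
  simp only [K]
  push_cast
  generalize (a : ZMod 3) = a3, (b : ZMod 3) = b3
  generalize (a : ZMod 4) = a4, (b : ZMod 4) = b4, (x : ZMod 4) = x4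
  revert a3 b3 a4 b4 x4
  decide +kernel

/-- A finite verification modulo `3` and `4`: the second and fifth terms of `hL`, after reflection. -/
lemma P3 (a b x y : ℤ) (h : ((a * x + b * y : ℤ) : ZMod 4) = 3) :
    -K x (x + y) (a - b) b + K (-x) (y - x) (-a - b) b =
      -(chi3 x * chi4 y * eps x * (2 * ev a - 3 * od a))
      - 3 * chi3 x * chi4 b * od a * od x
      - 3 * chi3 x * chi4 y * z4 x * (1 - z3 y) := by
  simp only [K]
  push_cast at h ⊢
  generalize (x : ZMod 3) = x3, (y : ZMod 3) = y3
  generalize (a : ZMod 4) = a4, (b : ZMod 4) = b4, (x : ZMod 4) = x4, (y : ZMod 4) = y4 at *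
  revert x3 y3 a4 b4 x4 y4
  decide +kernel

/-- On the solutions of `ax + by = N` with `N ≡ 3 (mod 4)`, a certain function of `a`, `x` only is
orthogonal to `chi4 b + chi4 y`. -/
lemma P0 (a b x y : ℤ) (h : ((a * x + b * y : ℤ) : ZMod 4) = 3) :
    (3 * wt x - eps a * (2 * ev x - 3 * od x) - 3 * od a * od x - 3 * z4 a) * (chi4 b + chi4 y)
      = 0 := by
  push_cast at h ⊢
  generalize (a : ZMod 4) = a4, (b : ZMod 4) = b4, (x : ZMod 4) = x4, (y : ZMod 4) = y4 at *
  revert a4 b4 x4 y4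
  decide +kernel

/-- The sum of `f` over the positive solutions of `ax + by = N`. -/
def S (N : ℕ) (f : ℕ → ℕ → ℕ → ℕ → ℤ) : ℤ := ∑ v ∈ Sol N, f v.1 v.2.1 v.2.2.1 v.2.2.2

lemma S_add (N : ℕ) (f g : ℕ → ℕ → ℕ → ℕ → ℤ) :
    S N (fun a b x y => f a b x y + g a b x y) = S N f + S N g := Finset.sum_add_distrib

lemma S_swap (N : ℕ) (f : ℕ → ℕ → ℕ → ℕ → ℤ) : S N f = S N (fun a b x y => f b a y x) :=
  sum_Sol_swap N f
lemma S_flip (N : ℕ) (f : ℕ → ℕ → ℕ → ℕ → ℤ) : S N f = S N (fun a b x y => f a y x b) :=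
  sum_Sol_flip N f
lemma S_flip' (N : ℕ) (f : ℕ → ℕ → ℕ → ℕ → ℤ) : S N f = S N (fun a b x y => f x b a y) :=
  sum_Sol_flip' N f
lemma S_congr (N : ℕ) {f g : ℕ → ℕ → ℕ → ℕ → ℤ}
    (h : ∀ a b x y : ℕ, a * x + b * y = N → f a b x y = g a b x y) : S N f = S N g := by
  refine Finset.sum_congr rfl ?_
  rintro ⟨a, b, x, y⟩ hv
  exact h _ _ _ _ (mem_Sol.1 hv).2.2.2.2

lemma S_dbl (N : ℕ) (f : ℕ → ℕ → ℕ → ℕ → ℤ) : S N f = S N (fun a b x y => f x y a b) := by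
  rw [S_flip, S_flip']
lemma S_tau (N : ℕ) (f : ℕ → ℕ → ℕ → ℕ → ℤ) : S N f = S N (fun a b x y => f y x b a) := by
  rw [S_swap, S_dbl]

lemma cast4 {N a b x y : ℕ} (hN : N % 4 = 3) (h : a * x + b * y = N) :
    (((a : ℤ) * x + b * y : ℤ) : ZMod 4) = 3 := by
  have : ((N : ℕ) : ZMod 4) = 3 := by
    have := ZMod.natCast_mod N 4
    rw [← this, hN]; rfl
  rw [← this, ← h]; push_cast; rfl

/-- The symmetries of `Sol N` identify the first and fourth terms of `hL` and pair up the others. -/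
lemma S_hL_1 (N : ℕ) :
    S N (fun a b x y => hL a b x y) =
      S N (fun a b x y => 2 * K a b x y
        + (K (b - a) b (-x) (x + y) - K (-a - b) (-b) (-x) (x - y))
        + (-K x (x + y) (a - b) b + K (-x) (y - x) (-a - b) b)) := by
  have e0 : S N (fun a b x y => hL a b x y) =
      S N (fun a b x y => K a b x y) + S N (fun a b x y => - K x (x + y) (a - b) b)
      + S N (fun a b x y => K (a - b) a (-y) (x + y)) + S N (fun a b x y => - K (-y) x (-b) a)
      + S N (fun a b x y => K (-b) (a - b) (-x - y) x)
      + S N (fun a b x y => - K (-x - y) (-y) (-a) (a - b)) := by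
    simp only [← S_add]; rfl
  have e3 : S N (fun a b x y => - K (-y) x (-b) a) = S N (fun a b x y => K a b x y) := by
    rw [S_tau]
    congr 1; funext a b x y
    simp only [K, Int.cast_neg, chi3_neg, wt_neg, z4_neg]; ring
  have e2 := S_swap N (fun a b x y => K (a - b) a (-y) (x + y))
  have e5 : S N (fun a b x y => - K (-x - y) (-y) (-a) (a - b)) =
      S N (fun a b x y => - K (-a - b) (-b) (-x) (x - y)) := by
    rw [S_dbl]
  have e4 := S_tau N (fun a b x y => K (-b) (a - b) (-x - y) x)
  rw [e0, e3, e2, e5, e4]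
  simp only [← S_add]
  congr 1; funext a b x y
  rw [show (y : ℤ) + x = x + y by ring, show -(b : ℤ) - a = -a - b by ring]; ring

/-- After symmetrization, only the part of the kernel with `3 ∣ b` survives, and the summand separates
into a function of `(a, x)` times a function of `b`. -/
lemma S_hL (N : ℕ) (hN : N % 4 = 3) :
    S N (fun a b x y => hL a b x y) =
      S N (fun a b x _ => (chi3 a * (-3 * wt x + 9 * z4 a - 3 * od a)) * (chi4 b * z3 b)) := by
  have e1 : S N (fun a b x y => hL a b x y) =
      S N (fun a b x y => 2 * K a b x y) +
      S N (fun a b x y => chi3 a * chi4 b * ((1 - 3 * z3 b) * wt x - 3 * z3 b * od a)) +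
      S N (fun a b x y => -(chi3 x * chi4 y * eps x * (2 * ev a - 3 * od a))) +
      S N (fun a b x y => - 3 * chi3 x * chi4 b * od a * od x) +
      S N (fun a b x y => - 3 * chi3 x * chi4 y * z4 x * (1 - z3 y)) := by
    rw [S_hL_1]
    simp only [← S_add]
    refine S_congr N fun a b x y h => ?_
    rw [P2, P3 _ _ _ _ (cast4 hN h)]
    simp only [Int.cast_natCast]; ring
  have e2 := S_dbl N (fun a b x y => -(chi3 x * chi4 y * eps x * (2 * ev a - 3 * od a)))
  have e3 := S_flip' N (fun a b x y => - 3 * chi3 x * chi4 b * od a * od x)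
  have e4 := S_dbl N (fun a b x y => - 3 * chi3 x * chi4 y * z4 x * (1 - z3 y))
  have e5 : 2 * S N (fun a b x y => chi3 a *
      (3 * wt x - eps a * (2 * ev x - 3 * od x) - 3 * od a * od x - 3 * z4 a) * chi4 b) = 0 := by
    rw [two_mul]
    nth_rewrite 2 [S_flip]
    rw [← S_add]
    trans S N (fun _ _ _ _ => 0)
    · refine S_congr N fun a b x y h => ?_
      have := P0 _ _ _ _ (cast4 hN h)
      simp only [Int.cast_natCast] at this
      linear_combination (chi3 a) * this
    · simp [S]
  rw [e1, e2, e3, e4]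
  have e6 := (mul_eq_zero.1 e5).resolve_left two_ne_zero
  refine Eq.trans ?_ (add_zero _)
  rw [← e6]
  simp only [← S_add]
  refine S_congr N fun a b x y h => ?_
  simp only [K, Int.cast_natCast]
  ring

/-- A separated sum over `ax + by = N` is a convolution of divisor sums, with `m = ax` and `N - m = by`. -/
lemma S_conv (N : ℕ) (F G : ℕ → ℕ → ℤ) :
    S N (fun a b x y => F a x * G b y) =
      ∑ p ∈ Finset.HasAntidiagonal.antidiagonal N, (∑ u ∈ p.1.divisorsAntidiagonal, F u.1 u.2) *
        ∑ u ∈ p.2.divisorsAntidiagonal, G u.1 u.2 := by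
  simp only [Finset.sum_mul_sum]
  rw [S]
  simp only [Finset.sum_sigma']
  refine Finset.sum_bij' (fun v _ => ⟨(v.1 * v.2.2.1, v.2.1 * v.2.2.2), ⟨(v.1, v.2.2.1),
      (v.2.1, v.2.2.2)⟩⟩) (fun w _ => (w.2.1.1, w.2.2.1, w.2.1.2, w.2.2.2)) ?_ ?_ ?_ ?_ ?_
  · rintro ⟨a, b, x, y⟩ h
    rw [mem_Sol] at h
    obtain ⟨ha, hb, hx, hy, h⟩ := h
    simp [h, ha.ne', hb.ne', hx.ne', hy.ne']
  · rintro ⟨⟨m, M⟩, ⟨⟨a, x⟩, ⟨b, y⟩⟩⟩ h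
    simp only [Finset.mem_sigma, Finset.HasAntidiagonal.mem_antidiagonal, Nat.mem_divisorsAntidiagonal] at h
    obtain ⟨h1, ⟨rfl, h2⟩, rfl, h3⟩ := h
    rw [mem_Sol]
    simp only [ne_eq, mul_eq_zero, not_or] at h2 h3
    exact ⟨Nat.pos_of_ne_zero h2.1, Nat.pos_of_ne_zero h3.1, Nat.pos_of_ne_zero h2.2,
      Nat.pos_of_ne_zero h3.2, h1⟩
  · rintro ⟨a, b, x, y⟩ h; rfl
  · rintro ⟨⟨m, M⟩, ⟨⟨a, x⟩, ⟨b, y⟩⟩⟩ h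
    simp only [Finset.mem_sigma, Finset.HasAntidiagonal.mem_antidiagonal, Nat.mem_divisorsAntidiagonal] at h
    obtain ⟨h1, ⟨rfl, h2⟩, rfl, h3⟩ := h
    rfl
  · rintro ⟨a, b, x, y⟩ h; rfl

/-- The divisor sum `∑_{d ∣ m} chi3(d)`. -/
def g3 (m : ℕ) : ℤ := ∑ d ∈ m.divisors, chi3 d

/-- The divisor sum `∑_{d ∣ m} chi4(d)`. -/
def g4 (m : ℕ) : ℤ := ∑ d ∈ m.divisors, chi4 d

/-- The value `g(m/c)`, read as `0` if `c` does not divide `m`. -/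
def gext (g : ℕ → ℤ) (c m : ℕ) : ℤ := if c ∣ m then g (m / c) else 0

lemma sum_dvd_snd (f : ℕ → ℤ) (c m : ℕ) (hc : 0 < c) :
    ∑ u ∈ m.divisorsAntidiagonal, (if c ∣ u.2 then f u.1 else 0) =
      gext (fun n => ∑ d ∈ n.divisors, f d) c m := by
  unfold gext
  rw [← Finset.sum_filter]
  split_ifs with h
  · obtain ⟨k, rfl⟩ := h
    beta_reduce
    rw [Nat.mul_div_cancel_left k hc, ← Nat.sum_divisorsAntidiagonal (fun d _ => f d)]
    refine Finset.sum_nbij' (fun u => (u.1, u.2 / c)) (fun u => (u.1, c * u.2)) ?_ ?_ ?_ ?_ ?_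
    · rintro ⟨a, x⟩ h
      simp only [Finset.mem_filter, Nat.mem_divisorsAntidiagonal] at h ⊢
      obtain ⟨⟨h1, h2⟩, y, rfl⟩ := h
      rw [Nat.mul_div_cancel_left y hc]
      refine ⟨Nat.eq_of_mul_eq_mul_left hc ?_, by rintro rfl; simp at h2⟩
      rw [← h1]; ring
    · rintro ⟨a, x⟩ h
      simp only [Finset.mem_filter, Nat.mem_divisorsAntidiagonal] at h ⊢
      obtain ⟨rfl, h2⟩ := h
      exact ⟨⟨by ring, by simp at h2 ⊢; omega⟩, dvd_mul_right _ _⟩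
    · rintro ⟨a, x⟩ h
      simp only [Finset.mem_filter] at h
      simp [Nat.mul_div_cancel' h.2]
    · rintro ⟨a, x⟩ h
      simp [Nat.mul_div_cancel_left x hc]
    · simp
  · refine Finset.sum_eq_zero ?_
    rintro ⟨a, x⟩ h'
    simp only [Finset.mem_filter, Nat.mem_divisorsAntidiagonal] at h'
    exact absurd (h'.1.1 ▸ h'.2.mul_left a) h

lemma sum_dvd_fst (f : ℕ → ℤ) (c m : ℕ) (hc : 0 < c) (hf : ∀ k, f (c * k) = f c * f k) :
    ∑ u ∈ m.divisorsAntidiagonal, (if c ∣ u.1 then f u.1 else 0) =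
      f c * gext (fun n => ∑ d ∈ n.divisors, f d) c m := by
  unfold gext
  rw [← Finset.sum_filter]
  split_ifs with h
  · obtain ⟨k, rfl⟩ := h
    beta_reduce
    rw [Nat.mul_div_cancel_left k hc, ← Nat.sum_divisorsAntidiagonal (fun d _ => f d),
      Finset.mul_sum]
    refine Finset.sum_nbij' (fun u => (u.1 / c, u.2)) (fun u => (c * u.1, u.2)) ?_ ?_ ?_ ?_ ?_
    · rintro ⟨a, x⟩ h
      simp only [Finset.mem_filter, Nat.mem_divisorsAntidiagonal] at h ⊢
      obtain ⟨⟨h1, h2⟩, y, rfl⟩ := h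
      rw [Nat.mul_div_cancel_left y hc]
      refine ⟨Nat.eq_of_mul_eq_mul_left hc ?_, by rintro rfl; simp at h2⟩
      rw [← h1]; ring
    · rintro ⟨a, x⟩ h
      simp only [Finset.mem_filter, Nat.mem_divisorsAntidiagonal] at h ⊢
      obtain ⟨rfl, h2⟩ := h
      exact ⟨⟨by ring, by simp at h2 ⊢; omega⟩, dvd_mul_right _ _⟩
    · rintro ⟨a, x⟩ h
      simp only [Finset.mem_filter] at h
      simp [Nat.mul_div_cancel' h.2]
    · rintro ⟨a, x⟩ h
      simp [Nat.mul_div_cancel_left a hc]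
    · rintro ⟨a, x⟩ h
      simp only [Finset.mem_filter] at h
      obtain ⟨-, y, rfl⟩ := h
      rw [hf, Nat.mul_div_cancel_left y hc]
  · rw [mul_zero]
    refine Finset.sum_eq_zero ?_
    rintro ⟨a, x⟩ h'
    simp only [Finset.mem_filter, Nat.mem_divisorsAntidiagonal] at h'
    exact absurd (h'.1.1 ▸ h'.2.mul_right x) h

lemma chi3_mul : ∀ a b : ZMod 3, chi3 (a * b) = chi3 a * chi3 b := by decide
lemma chi4_mul : ∀ a b : ZMod 4, chi4 (a * b) = chi4 a * chi4 b := by decide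

lemma z3_nat (n : ℕ) : z3 n = if 3 ∣ n then 1 else 0 := by
  simp only [← ZMod.natCast_eq_zero_iff]
  generalize (n : ZMod 3) = x; revert x; decide
lemma z4_nat (n : ℕ) : z4 n = if 4 ∣ n then 1 else 0 := by
  simp only [← ZMod.natCast_eq_zero_iff]
  generalize (n : ZMod 4) = x; revert x; decide
lemma od_nat (n : ℕ) : od n = 1 - if 2 ∣ n then 1 else 0 := by
  have : 2 ∣ n ↔ 2 * (n : ZMod 4) = 0 := by
    rw [show (2 : ZMod 4) * n = ((2 * n : ℕ) : ZMod 4) by push_cast; rfl,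
      ZMod.natCast_eq_zero_iff]
    omega
  simp only [this]
  generalize (n : ZMod 4) = x; revert x; decide
lemma wt_nat (n : ℕ) : wt n = 1 - (if 2 ∣ n then 1 else 0) - 3 * if 4 ∣ n then 1 else 0 := by
  rw [← z4_nat]
  have := od_nat n
  rw [← this]
  generalize (n : ZMod 4) = x; revert x; decide

lemma S_hL' (N : ℕ) (hN : N % 4 = 3) :
    S N (fun a b x y => hL a b x y) = 6 * ∑ p ∈ Finset.HasAntidiagonal.antidiagonal N,
      (g3 p.1 - 3 * gext g3 4 p.1) * gext g4 3 p.2 := by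
  rw [S_hL N hN, S_conv N (fun a x => chi3 a * (-3 * wt x + 9 * z4 a - 3 * od a))
    (fun b _ => chi4 b * z3 b), Finset.mul_sum]
  refine Finset.sum_congr rfl fun p _ => ?_
  have e1 := sum_dvd_fst (fun d => chi4 d) 3 p.2 (by norm_num)
    (fun k => by push_cast; exact chi4_mul _ _)
  have e2 := sum_dvd_fst (fun d => chi3 d) 4 p.1 (by norm_num)
    (fun k => by push_cast; exact chi3_mul _ _)
  have e3 := sum_dvd_fst (fun d => chi3 d) 2 p.1 (by norm_num)
    (fun k => by push_cast; exact chi3_mul _ _)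
  have e4 := sum_dvd_snd (fun d => chi3 d) 4 p.1 (by norm_num)
  have e5 := sum_dvd_snd (fun d => chi3 d) 2 p.1 (by norm_num)
  have e6 : ∑ u ∈ p.1.divisorsAntidiagonal, chi3 u.1 = g3 p.1 :=
    Nat.sum_divisorsAntidiagonal (fun d _ => chi3 d)
  have f1 : ∑ u ∈ p.2.divisorsAntidiagonal, chi4 u.1 * z3 u.1 = - gext g4 3 p.2 := by
    trans ∑ u ∈ p.2.divisorsAntidiagonal, (if 3 ∣ u.1 then chi4 u.1 else 0)
    · refine Finset.sum_congr rfl fun u _ => ?_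
      rw [z3_nat]; split_ifs <;> simp
    · rw [e1, show chi4 ((3 : ℕ) : ZMod 4) = -1 by rfl]
      simp only [neg_mul, one_mul]; rfl
  have f2 : ∑ u ∈ p.1.divisorsAntidiagonal, chi3 u.1 * (-3 * wt u.2 + 9 * z4 u.1 - 3 * od u.1) =
      -6 * g3 p.1 + 18 * gext g3 4 p.1 := by
    trans ∑ u ∈ p.1.divisorsAntidiagonal, (-6 * chi3 u.1 + 3 * (if 2 ∣ u.2 then chi3 u.1 else 0)
        + 9 * (if 4 ∣ u.2 then chi3 u.1 else 0) + 9 * (if 4 ∣ u.1 then chi3 u.1 else 0)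
        + 3 * (if 2 ∣ u.1 then chi3 u.1 else 0))
    · refine Finset.sum_congr rfl fun u _ => ?_
      rw [wt_nat, z4_nat, od_nat]; split_ifs <;> ring
    · simp only [Finset.sum_add_distrib, ← Finset.mul_sum]
      rw [e2, e3, e4, e5, e6, show chi3 ((4 : ℕ) : ZMod 3) = 1 by rfl,
        show chi3 ((2 : ℕ) : ZMod 3) = -1 by rfl]
      change -6 * g3 p.1 + 3 * gext g3 2 p.1 + 9 * gext g3 4 p.1 + 9 * (1 * gext g3 4 p.1) +
        3 * (-1 * gext g3 2 p.1) = _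
      ring
  rw [f1, f2]; ring

/-- The part of `hL e e x (d - x)` that does not depend on `e`, for odd `d` and `e`, as a function of `x`
and of the classes of `d` modulo `3` and `4`. -/
def Bf (d3 : ZMod 3) (d4 : ZMod 4) (x : ℕ) : ℤ :=
  3 * chi3 x * chi4 d4 * (1 - z3 d3 * z4 x) + chi3 (d3 - x) * chi4 x * (1 + 3 * z3 x * z4 (d4 - x))
    - chi3 d3 * chi4 (d4 - x)

lemma od4 {n : ℕ} (hn : Odd n) : (n : ZMod 4) = 1 ∨ (n : ZMod 4) = 3 := by
  have h : n % 4 = 1 ∨ n % 4 = 3 := by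
    obtain ⟨k, rfl⟩ := hn; omega
  rw [← ZMod.natCast_mod n 4]
  rcases h with h | h <;> rw [h]
  · left; rfl
  · right; rfl

lemma hL_diag (e d x : ℕ) (he : Odd e) (hd : Odd d) :
    hL e e x ((d : ℤ) - x) = chi3 e * chi4 e * wt x + Bf d d x := by
  have he := od4 he
  have hd := od4 hd
  simp only [hL, K, Bf]
  push_cast
  generalize (e : ZMod 3) = e3, (d : ZMod 3) = d3, (x : ZMod 3) = x3
  generalize (e : ZMod 4) = e4, (d : ZMod 4) = d4, (x : ZMod 4) = x4 at *
  revert e3 d3 x3 e4 d4 x4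
  decide +kernel

lemma sum_periodic (f : ℕ → ℤ) (p : ℕ) (hf : ∀ n, f (n + p) = f n) (q r : ℕ) :
    ∑ x ∈ Finset.range (p * q + r), f x = q * ∑ x ∈ Finset.range p, f x +
      ∑ x ∈ Finset.range r, f x := by
  induction q with
  | zero => simp
  | succ q ih =>
    rw [show p * (q + 1) + r = p + (p * q + r) by ring, Finset.sum_range_add]
    have : ∀ x, f (p + x) = f x := fun x => by rw [add_comm, hf]
    simp only [this]
    rw [ih]; push_cast; ring

lemma Bf_per (d3 : ZMod 3) (d4 : ZMod 4) (n : ℕ) : Bf d3 d4 (n + 12) = Bf d3 d4 n := by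
  have h3 : ((n + 12 : ℕ) : ZMod 3) = n := by
    push_cast; rw [show (12 : ZMod 3) = 0 by rfl, add_zero]
  have h4 : ((n + 12 : ℕ) : ZMod 4) = n := by
    push_cast; rw [show (12 : ZMod 4) = 0 by rfl, add_zero]
  simp only [Bf, h3, h4]

lemma sum_wt (d : ℕ) (hd : Odd d) :
    4 * ∑ x ∈ Finset.range d, wt x = - d - 8 - 3 * chi4 d := by
  have h : d % 4 = 1 ∨ d % 4 = 3 := by
    obtain ⟨k, rfl⟩ := hd; omega
  have hp : ∀ n : ℕ, wt ((n + 4 : ℕ) : ZMod 4) = wt n := fun n => by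
    push_cast; rw [show (4 : ZMod 4) = 0 by rfl, add_zero]
  have e := sum_periodic (fun x => wt x) 4 hp (d / 4) (d % 4)
  rw [Nat.div_add_mod] at e
  rw [e, ← ZMod.natCast_mod d 4]
  have e' : ((4 * (d / 4) + d % 4 : ℕ) : ℤ) = d := by rw [Nat.div_add_mod]
  rcases h with h | h <;> rw [h] at e' ⊢
  · rw [show ∑ x ∈ Finset.range 4, wt (x : ZMod 4) = -1 by decide,
      show ∑ x ∈ Finset.range 1, wt (x : ZMod 4) = -3 by decide,
      show chi4 ((1 : ℕ) : ZMod 4) = 1 by decide, ← e']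
    push_cast; ring
  · rw [show ∑ x ∈ Finset.range 4, wt (x : ZMod 4) = -1 by decide,
      show ∑ x ∈ Finset.range 3, wt (x : ZMod 4) = -2 by decide,
      show chi4 ((3 : ℕ) : ZMod 4) = -1 by decide, ← e']
    push_cast; ring

/-- `Bf` has period `12` in `x`, so its sums are determined by the sum over a full period and the sums
over initial segments; both are checked for each odd residue modulo `12`. -/
lemma sum_Bf_const : ∀ r : Fin 12, Odd r.1 →
    4 * ∑ x ∈ Finset.range 12, Bf r.1 r.1 x = 12 * chi3 r.1 * chi4 r.1 ∧
    4 * ∑ x ∈ Finset.range r.1, Bf r.1 r.1 x = r.1 * chi3 r.1 * chi4 r.1 - 9 * chi3 r.1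
      - 8 * chi3 r.1 * chi4 r.1 + 12 * chi4 r.1 - 8 * chi4 r.1 * z3 r.1 := by
  decide +kernel

lemma sum_Bf (d : ℕ) (hd : Odd d) :
    4 * ∑ x ∈ Finset.range d, Bf d d x = d * chi3 d * chi4 d - 9 * chi3 d
      - 8 * chi3 d * chi4 d + 12 * chi4 d - 8 * chi4 d * z3 d := by
  have h := sum_Bf_const ⟨d % 12, Nat.mod_lt _ (by norm_num)⟩
    (by obtain ⟨k, rfl⟩ := hd; exact ⟨k % 6, by dsimp only; omega⟩)
  have h3 : ((d % 12 : ℕ) : ZMod 3) = d := by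
    rw [ZMod.natCast_eq_natCast_iff']; omega
  have h4 : ((d % 12 : ℕ) : ZMod 4) = d := by
    rw [ZMod.natCast_eq_natCast_iff']; omega
  simp only [h3, h4] at h
  have e := sum_periodic (Bf d d) 12 (Bf_per _ _) (d / 12) (d % 12)
  rw [Nat.div_add_mod] at e
  have e' : ((12 * (d / 12) + d % 12 : ℕ) : ℤ) = d := by rw [Nat.div_add_mod]
  rw [e]
  push_cast at e'
  have h1 := h.1
  have h2 := h.2
  push_cast at h2 ⊢
  linear_combination ((d : ℤ) / 12) * h1 + h2 + chi3 d * chi4 d * e'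

lemma Bf_zero : ∀ (d3 : ZMod 3) (d4 : ZMod 4), Bf d3 d4 0 = - chi3 d3 * chi4 d4 := by decide

/-- The diagonal terms with `a = b = e` and `x + y = d`. -/
lemma diag_inner (e d : ℕ) (he : Odd e) (hd : Odd d) :
    4 * ∑ x ∈ Finset.Ico 1 d, hL e e x ((d : ℤ) - x) =
      chi3 e * chi4 e * (-d + 4 - 3 * chi4 d) + d * chi3 d * chi4 d - 9 * chi3 d
      - 4 * chi3 d * chi4 d + 12 * chi4 d - 8 * chi4 d * z3 d := by
  have h0 := hL_diag e d 0 he hd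
  have e1 : ∑ x ∈ Finset.range d, hL e e x ((d : ℤ) - x) = hL e e 0 ((d : ℤ) - (0 : ℕ))
      + ∑ x ∈ Finset.Ico 1 d, hL e e x ((d : ℤ) - x) := by
    rw [Finset.range_eq_Ico, Finset.sum_eq_sum_Ico_succ_bot hd.pos]; simp
  have e2 : ∑ x ∈ Finset.range d, hL e e x ((d : ℤ) - x) =
      chi3 e * chi4 e * ∑ x ∈ Finset.range d, wt x + ∑ x ∈ Finset.range d, Bf d d x := by
    rw [Finset.mul_sum, ← Finset.sum_add_distrib]
    exact Finset.sum_congr rfl fun x _ => hL_diag e d x he hd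
  have h1 := sum_wt d hd
  have h2 := sum_Bf d hd
  have h3 := Bf_zero d d
  have h4 : wt ((0 : ℕ) : ZMod 4) = -3 := by decide
  rw [h3, h4] at h0
  push_cast at h0 e1
  rw [h0] at e1
  linear_combination -4 * e1 + 4 * e2 + chi3 e * chi4 e * h1 + h2

lemma g4_eq_zero {N : ℕ} (hN : N % 4 = 3) : g4 N = 0 := by
  have h1 : g4 N = ∑ u ∈ N.divisorsAntidiagonal, chi4 u.1 :=
    (Nat.sum_divisorsAntidiagonal (fun d _ => chi4 d)).symm
  have h2 : g4 N = ∑ u ∈ N.divisorsAntidiagonal, chi4 u.2 :=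
    (Nat.sum_divisorsAntidiagonal' (fun _ d => chi4 d)).symm
  have h3 : ∑ u ∈ N.divisorsAntidiagonal, (chi4 u.1 + chi4 u.2) = 0 := by
    refine Finset.sum_eq_zero ?_
    rintro ⟨a, x⟩ h
    rw [Nat.mem_divisorsAntidiagonal] at h
    have := cast4 (b := 0) (y := 0) hN (by rw [← h.1]; ring : a * x + 0 * 0 = N)
    push_cast at this
    rw [add_zero] at this
    dsimp only
    generalize (a : ZMod 4) = a4, (x : ZMod 4) = x4 at *
    revert a4 x4
    decide
  rw [Finset.sum_add_distrib] at h3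
  omega

/-- The sum `∑ e χ(d)` over `N = de`, where `χ = chi3 · chi4`. -/
def E1 (N : ℕ) : ℤ := ∑ u ∈ N.divisorsAntidiagonal, u.2 * (chi3 u.1 * chi4 u.1)

/-- The sum `∑ e χ(e)` over `N = de`, where `χ = chi3 · chi4`. -/
def E2 (N : ℕ) : ℤ := ∑ u ∈ N.divisorsAntidiagonal, u.2 * (chi3 u.2 * chi4 u.2)

/-- For `N ≡ 3 (mod 4)`, any `de = N` has `chi4 d * chi4 e = -1` and `g4 N = 0`, which simplifies the
sum of `diag_inner` over `de = N`. -/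
lemma diag_eval (N : ℕ) (hN : N % 4 = 3) :
    4 * ∑ v ∈ (Sol N).filter (fun v => v.1 = v.2.1), hL v.1 v.2.1 v.2.2.1 v.2.2.2 =
      E2 N - E1 N - 6 * g3 N + 8 * gext g4 3 N := by
  have e1 : ∑ v ∈ (Sol N).filter (fun v => v.1 = v.2.1), hL v.1 v.2.1 v.2.2.1 v.2.2.2 =
      ∑ u ∈ N.divisorsAntidiagonal, ∑ x ∈ Finset.Ico 1 u.2, hL u.1 u.1 x ((u.2 : ℤ) - x) := by
    rw [Finset.sum_sigma']
    refine Finset.sum_bij' (fun v _ => ⟨(v.1, v.2.2.1 + v.2.2.2), v.2.2.1⟩)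
      (fun w _ => (w.1.1, w.1.1, w.2, w.1.2 - w.2)) ?_ ?_ ?_ ?_ ?_
    · rintro ⟨a, b, x, y⟩ h
      simp only [Finset.mem_filter, mem_Sol] at h
      obtain ⟨⟨ha, hb, hx, hy, h⟩, rfl⟩ := h
      simp only [Finset.mem_sigma, Nat.mem_divisorsAntidiagonal, Finset.mem_Ico]
      exact ⟨⟨by rw [← h]; ring, by rintro rfl; simp at hN⟩, by omega⟩
    · rintro ⟨⟨e, d⟩, x⟩ h
      simp only [Finset.mem_sigma, Nat.mem_divisorsAntidiagonal, Finset.mem_Ico] at h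
      simp only [Finset.mem_filter, mem_Sol]
      obtain ⟨⟨rfl, h1⟩, h2, h3⟩ := h
      have he : 0 < e := Nat.pos_of_ne_zero (by rintro rfl; simp at h1)
      obtain ⟨k, rfl⟩ := Nat.exists_eq_add_of_lt h3
      refine ⟨⟨he, he, h2, by omega, ?_⟩, trivial⟩
      rw [show x + k + 1 - x = k + 1 by omega]; ring
    · rintro ⟨a, b, x, y⟩ h
      simp only [Finset.mem_filter, mem_Sol] at h
      simp [h.2]
    · rintro ⟨⟨e, d⟩, x⟩ h
      simp only [Finset.mem_sigma, Nat.mem_divisorsAntidiagonal, Finset.mem_Ico] at h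
      dsimp only
      rw [Nat.add_sub_cancel' h.2.2.le]
    · rintro ⟨a, b, x, y⟩ h
      simp only [Finset.mem_filter, mem_Sol] at h
      dsimp only
      rw [← h.2]; push_cast; congr 1; ring
  have e2 : 4 * ∑ v ∈ (Sol N).filter (fun v => v.1 = v.2.1), hL v.1 v.2.1 v.2.2.1 v.2.2.2 =
      ∑ u ∈ N.divisorsAntidiagonal, (4 * (chi3 u.1 * chi4 u.1) + u.2 * (chi3 u.2 * chi4 u.2)
        - u.2 * (chi3 u.1 * chi4 u.1) + 3 * chi3 u.1 - 9 * chi3 u.2 - 4 * (chi3 u.2 * chi4 u.2)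
        + 12 * chi4 u.2 - 8 * (if 3 ∣ u.2 then chi4 u.2 else 0)) := by
    rw [e1, Finset.mul_sum]
    refine Finset.sum_congr rfl ?_
    rintro ⟨e, d⟩ h
    rw [Nat.mem_divisorsAntidiagonal] at h
    have hodd : Odd (e * d) := by rw [h.1, Nat.odd_iff]; omega
    rw [Nat.odd_mul] at hodd
    dsimp only
    rw [diag_inner e d hodd.1 hodd.2, z3_nat]
    have := cast4 (b := 0) (y := 0) hN (by rw [← h.1]; ring : e * d + 0 * 0 = N)
    push_cast at this
    rw [add_zero] at this
    have h4 : chi4 e * chi4 d = -1 := by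
      generalize (e : ZMod 4) = a4, (d : ZMod 4) = x4 at *
      revert a4 x4
      decide
    split_ifs <;> linear_combination (-3 * chi3 e) * h4
  rw [e2]
  simp only [Finset.sum_add_distrib, Finset.sum_sub_distrib, ← Finset.mul_sum]
  have f1 : ∑ u ∈ N.divisorsAntidiagonal, chi3 u.1 = g3 N :=
    Nat.sum_divisorsAntidiagonal (fun d _ => chi3 d)
  have f2 : ∑ u ∈ N.divisorsAntidiagonal, chi3 u.2 = g3 N :=
    Nat.sum_divisorsAntidiagonal' (fun _ d => chi3 d)
  have f3 : ∑ u ∈ N.divisorsAntidiagonal, chi4 u.2 = g4 N :=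
    Nat.sum_divisorsAntidiagonal' (fun _ d => chi4 d)
  have f4 : ∑ u ∈ N.divisorsAntidiagonal, (if 3 ∣ u.2 then chi4 u.2 else 0) = - gext g4 3 N := by
    have := sum_dvd_fst (fun d => chi4 d) 3 N (by norm_num)
      (fun k => by push_cast; exact chi4_mul _ _)
    rw [show chi4 ((3 : ℕ) : ZMod 4) = -1 by rfl] at this
    rw [Nat.sum_divisorsAntidiagonal' (fun _ d => if 3 ∣ d then chi4 d else 0),
      ← Nat.sum_divisorsAntidiagonal (fun d _ => if 3 ∣ d then chi4 d else 0), this]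
    simp only [neg_mul, one_mul]; rfl
  have f5 : ∑ u ∈ N.divisorsAntidiagonal, (chi3 u.1 * chi4 u.1) =
      ∑ u ∈ N.divisorsAntidiagonal, (chi3 u.2 * chi4 u.2) := by
    rw [Nat.sum_divisorsAntidiagonal' (fun _ d => chi3 d * chi4 d),
      ← Nat.sum_divisorsAntidiagonal (fun d _ => chi3 d * chi4 d)]
  rw [f1, f2, f3, f4, f5, g4_eq_zero hN, E1, E2]
  ring

theorem liouville (N : ℕ) (hN : N % 4 = 3) :
    24 * ∑ p ∈ Finset.HasAntidiagonal.antidiagonal N,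
      (g3 p.1 - 3 * gext g3 4 p.1) * gext g4 3 p.2 =
      E2 N - E1 N - 6 * g3 N + 8 * gext g4 3 N := by
  rw [← diag_eval N hN, ← sum_Sol_hL]
  have := S_hL' N hN
  rw [S] at this
  rw [this]; ring

/-! ### The forms `X² + Y²` and `X² + 3Y²` -/

/-- The divisor sum `∑_{d ∣ m} f(d)`. -/
def G (f : ℕ → ℤ) (m : ℕ) : ℤ := ∑ d ∈ m.divisors, f d

/-- The Hecke recursion for the divisor sum of a function that is multiplicative with respect to `p`. -/
lemma G_rec (f : ℕ → ℤ) (p m : ℕ) (hp : p.Prime) (hf : ∀ k, f (p * k) = f p * f k) (hm : m ≠ 0) :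
    G f (p * m) = (1 + f p) * G f m - f p * gext (G f) p m := by
  have key : ∀ n, ∑ d ∈ n.divisors, (if p ∣ d then f d else 0) = f p * gext (G f) p n := by
    intro n
    rw [← Nat.sum_divisorsAntidiagonal (fun d _ => if p ∣ d then f d else 0)]
    exact sum_dvd_fst f p n hp.pos hf
  have split : ∀ n, G f n = ∑ d ∈ n.divisors, (if p ∣ d then f d else 0) +
      ∑ d ∈ n.divisors, (if p ∣ d then 0 else f d) := by
    intro n
    rw [← Finset.sum_add_distrib]
    refine Finset.sum_congr rfl fun d _ => ?_
    split_ifs <;> simp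
  have same : ∑ d ∈ (p * m).divisors, (if p ∣ d then 0 else f d) =
      ∑ d ∈ m.divisors, (if p ∣ d then 0 else f d) := by
    symm
    refine Finset.sum_subset (Nat.divisors_subset_of_dvd (mul_ne_zero hp.ne_zero hm)
      (dvd_mul_left _ _)) ?_
    intro d hd hd'
    rw [if_pos]
    by_contra h
    exact hd' (Nat.mem_divisors.2 ⟨((Nat.Prime.coprime_iff_not_dvd hp).2 h).symm.dvd_of_dvd_mul_left
      (Nat.mem_divisors.1 hd).1, hm⟩)
  have h1 := split (p * m)
  have h2 := split m
  rw [key] at h1 h2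
  rw [same] at h1
  have : gext (G f) p (p * m) = G f m := by
    rw [gext, if_pos (dvd_mul_right _ _), Nat.mul_div_cancel_left m hp.pos]
  rw [this] at h1
  rw [h1]
  linear_combination -h2

/-- The Hecke recursion at the primes dividing `n` determines a function at `n` from its value at `1`. -/
lemma rec_unique (good : ℕ → Prop) (c : ℤ) (f r g : ℕ → ℤ) (h1 : r 1 = c * g 1)
    (hr : ∀ p m, p.Prime → good p → m ≠ 0 →
      r (p * m) = (1 + f p) * r m - f p * gext r p m)
    (hg : ∀ p m, p.Prime → good p → m ≠ 0 →
      g (p * m) = (1 + f p) * g m - f p * gext g p m)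
    (n : ℕ) (hn : n ≠ 0) (hgood : ∀ p, p.Prime → p ∣ n → good p) : r n = c * g n := by
  induction n using Nat.strong_induction_on with
  | _ n ih =>
    by_cases hn1 : n = 1
    · rw [hn1, h1]
    · have hp := Nat.minFac_prime hn1
      obtain ⟨m, hm⟩ := Nat.minFac_dvd n
      set p := n.minFac
      have hm0 : m ≠ 0 := by rintro rfl; exact hn hm
      have hlt : m < n := by
        have := hp.two_le
        have : 0 < m := Nat.pos_of_ne_zero hm0
        rw [hm]; nlinarith
      have hpg := hgood p hp (hm ▸ dvd_mul_right _ _)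
      have i1 := ih m hlt hm0 (fun q hq hd => hgood q hq (hm ▸ hd.mul_left p))
      have i2 : gext r p m = c * gext g p m := by
        unfold gext
        split_ifs with hd
        · have h0 : m / p ≠ 0 := (Nat.div_pos (Nat.le_of_dvd (Nat.pos_of_ne_zero hm0) hd) hp.pos).ne'
          exact ih (m / p) (lt_of_le_of_lt (Nat.div_le_self _ _) hlt) h0
            (fun q hq hd' => hgood q hq (hm ▸ (hd'.trans (Nat.div_dvd_of_dvd hd)).mul_left p))
        · simp
      rw [hm, hr p m hp hpg hm0, hg p m hp hpg hm0, i1, i2]; ring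

/-- The representations `(x, y)` of `n` as `x² + D y²`. The box contains all of them when `D > 0`. -/
noncomputable def rep (D : ℤ) (n : ℕ) : Finset (ℤ × ℤ) :=
  (Finset.Icc (-(n : ℤ)) n ×ˢ Finset.Icc (-(n : ℤ)) n).filter fun v => v.1 ^ 2 + D * v.2 ^ 2 = n

lemma mem_rep {D : ℤ} (hD : 0 < D) {n : ℕ} {x y : ℤ} :
    (x, y) ∈ rep D n ↔ x ^ 2 + D * y ^ 2 = n := by
  simp only [rep, Finset.mem_filter, Finset.mem_product, Finset.mem_Icc, and_iff_right_iff_imp]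
  intro h
  have hx : x ^ 2 ≤ n := by nlinarith [sq_nonneg y]
  have hy : y ^ 2 ≤ n := by nlinarith [sq_nonneg y, sq_nonneg x]
  refine ⟨⟨?_, ?_⟩, ?_, ?_⟩ <;> nlinarith

/-- The number of representations of `n` by `x² + D y²`. -/
noncomputable def r (D : ℤ) (n : ℕ) : ℤ := (rep D n).card

/-- If `p = a² + D b²`, multiplication by `a + b√-D` is a bijection from the representations of `n` to
those representations `(X, Y)` of `pn` with `p ∣ aY - bX`. -/
lemma split_aux {D : ℤ} (hD : 0 < D) {p : ℕ} (hp : p.Prime) {a b : ℤ} (hab : a ^ 2 + D * b ^ 2 = p)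
    (n : ℕ) :
    ((rep D (p * n)).filter fun v => (p : ℤ) ∣ a * v.2 - b * v.1).card = (rep D n).card := by
  have hp0 : (p : ℤ) ≠ 0 := by exact_mod_cast hp.ne_zero
  have hpp : Prime (p : ℤ) := Nat.prime_iff_prime_int.1 hp
  symm
  refine Finset.card_nbij' (fun v => (a * v.1 - D * b * v.2, a * v.2 + b * v.1))
    (fun v => ((a * v.1 + D * b * v.2) / p, (a * v.2 - b * v.1) / p)) ?_ ?_ ?_ ?_
  · rintro ⟨x, y⟩ h
    simp only [Finset.mem_coe, Finset.mem_filter, mem_rep hD] at h ⊢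
    push_cast
    refine ⟨?_, ⟨y, ?_⟩⟩
    · rw [← hab, ← h]; ring
    · rw [← hab]; ring
  · rintro ⟨x, y⟩ h
    simp only [Finset.mem_coe, Finset.mem_filter, mem_rep hD] at h ⊢
    obtain ⟨h, k, hk⟩ := h
    have hd : (p : ℤ) ∣ a * x + D * b * y := by
      refine hpp.dvd_of_dvd_pow (n := 2) ⟨p * n - p * (D * k ^ 2), ?_⟩
      push_cast at h
      have : (a * x + D * b * y) ^ 2 + D * (a * y - b * x) ^ 2 = (a^2 + D * b^2) * (x ^ 2 + D * y ^ 2) := by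
        ring
      rw [hk, h, hab] at this
      linear_combination this
    obtain ⟨l, hl⟩ := hd
    rw [hk, hl, Int.mul_ediv_cancel_left _ hp0, Int.mul_ediv_cancel_left _ hp0]
    push_cast at h
    have : (a * x + D * b * y) ^ 2 + D * (a * y - b * x) ^ 2 = (a^2 + D * b^2) * (x ^ 2 + D * y ^ 2) := by
      ring
    rw [hk, hl, h, hab] at this
    have h2 : ((p : ℤ) ^ 2) ≠ 0 := pow_ne_zero _ hp0
    apply mul_left_cancel₀ h2
    linear_combination this
  · rintro ⟨x, y⟩ h
    have e1 : a * (a * x - D * b * y) + D * b * (a * y + b * x) = p * x := by rw [← hab]; ring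
    have e2 : a * (a * y + b * x) - b * (a * x - D * b * y) = p * y := by rw [← hab]; ring
    simp only [e1, e2, Int.mul_ediv_cancel_left _ hp0]
  · rintro ⟨x, y⟩ h
    simp only [Finset.mem_coe, Finset.mem_filter, mem_rep hD] at h
    obtain ⟨h, k, hk⟩ := h
    have hd : (p : ℤ) ∣ a * x + D * b * y := by
      refine hpp.dvd_of_dvd_pow (n := 2) ⟨p * n - p * (D * k ^ 2), ?_⟩
      push_cast at h
      have : (a * x + D * b * y) ^ 2 + D * (a * y - b * x) ^ 2 = (a^2 + D * b^2) * (x ^ 2 + D * y ^ 2) := by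
        ring
      rw [hk, h, hab] at this
      linear_combination this
    obtain ⟨l, hl⟩ := hd
    simp only [hk, hl, Int.mul_ediv_cancel_left _ hp0, Prod.mk.injEq]
    constructor
    · apply mul_left_cancel₀ hp0
      linear_combination -a * hl + D * b * hk + x * hab
    · apply mul_left_cancel₀ hp0
      linear_combination -b * hl - a * hk + y * hab

lemma rep_conj {D : ℤ} (hD : 0 < D) (n : ℕ) (P : ℤ × ℤ → Prop) [DecidablePred P] :
    ((rep D n).filter fun v => P (v.1, -v.2)).card = ((rep D n).filter fun v => P v).card := by
  refine Finset.card_nbij' (fun v => (v.1, -v.2)) (fun v => (v.1, -v.2)) ?_ ?_ ?_ ?_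
  · rintro ⟨x, y⟩ h
    simp only [Finset.mem_coe, Finset.mem_filter, mem_rep hD, neg_sq] at h ⊢
    exact h
  · rintro ⟨x, y⟩ h
    simp only [Finset.mem_coe, Finset.mem_filter, mem_rep hD, neg_sq, neg_neg] at h ⊢
    exact h
  · intro v _; simp
  · intro v _; simp

/-- Representations of `pn` with both coordinates divisible by `p` correspond to those of `n/p`. -/
lemma rep_both {D : ℤ} (hD : 0 < D) {p : ℕ} (hp : p ≠ 0) (n : ℕ)  :
    (((rep D (p * n)).filter fun v => (p : ℤ) ∣ v.1 ∧ (p : ℤ) ∣ v.2).card : ℤ) = gext (r D) p n := by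
  have hp0 : (p : ℤ) ≠ 0 := by exact_mod_cast hp
  unfold gext
  split_ifs with hd
  · obtain ⟨m, rfl⟩ := hd
    rw [Nat.mul_div_cancel_left m (Nat.pos_of_ne_zero hp), r]
    norm_cast
    refine Finset.card_nbij' (fun v => (v.1 / p, v.2 / p)) (fun v => (p * v.1, p * v.2)) ?_ ?_ ?_ ?_
    · rintro ⟨x, y⟩ h
      simp only [Finset.mem_coe, Finset.mem_filter, mem_rep hD] at h ⊢
      obtain ⟨h, ⟨x, rfl⟩, ⟨y, rfl⟩⟩ := h
      rw [Int.mul_ediv_cancel_left _ hp0, Int.mul_ediv_cancel_left _ hp0]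
      push_cast at h
      apply mul_left_cancel₀ (pow_ne_zero 2 hp0)
      linear_combination h
    · rintro ⟨x, y⟩ h
      simp only [Finset.mem_coe, Finset.mem_filter, mem_rep hD] at h ⊢
      refine ⟨?_, dvd_mul_right _ _, dvd_mul_right _ _⟩
      push_cast
      rw [← h]; ring
    · rintro ⟨x, y⟩ h
      simp only [Finset.mem_coe, Finset.mem_filter] at h
      simp only [Int.mul_ediv_cancel' h.2.1, Int.mul_ediv_cancel' h.2.2]
    · rintro ⟨x, y⟩ h
      simp only [Int.mul_ediv_cancel_left _ hp0]
  · rw [Int.natCast_eq_zero, Finset.card_eq_zero, Finset.filter_eq_empty_iff]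
    rintro ⟨x, y⟩ h ⟨⟨x, rfl⟩, ⟨y, rfl⟩⟩
    rw [mem_rep hD] at h
    apply hd
    rw [← Int.natCast_dvd_natCast]
    refine ⟨x ^ 2 + D * y ^ 2, ?_⟩
    push_cast at h
    apply mul_left_cancel₀ hp0
    linear_combination -h

/-- Every representation `(X, Y)` of `pn` has `p ∣ aY - bX` or `p ∣ aY + bX`, and both hold exactly when
`p` divides `X` and `Y`; each condition cuts out `r D n` representations. -/
lemma r_split {D : ℤ} (hD : 0 < D) {p : ℕ} (hp : p.Prime) (hp2 : p ≠ 2) (hpD : ¬ (p : ℤ) ∣ D)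
    {a b : ℤ} (hab : a ^ 2 + D * b ^ 2 = p) (n : ℕ) :
    r D (p * n) = 2 * r D n - gext (r D) p n := by
  have hp0 : (p : ℤ) ≠ 0 := by exact_mod_cast hp.ne_zero
  have hpp : Prime (p : ℤ) := Nat.prime_iff_prime_int.1 hp
  have hp2' : ¬ (p : ℤ) ∣ 2 := by
    intro h
    have h' : p ∣ 2 := by exact_mod_cast h
    exact hp2 ((Nat.prime_dvd_prime_iff_eq hp Nat.prime_two).1 h')
  have key : (p : ℤ) ∣ a → (p : ℤ) ∣ b → False := by
    rintro ⟨a, rfl⟩ ⟨b, rfl⟩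
    have : (p : ℤ) * (a ^ 2 + D * b ^ 2) = 1 := by
      apply mul_left_cancel₀ hp0
      linear_combination hab
    exact hpp.not_isUnit (IsUnit.of_mul_eq_one _ this)
  have ha : ¬ (p : ℤ) ∣ a := by
    intro h
    refine key h ?_
    have : (p : ℤ) ∣ D * b ^ 2 := by
      rw [show D * b ^ 2 = p - a ^ 2 by rw [← hab]; ring]
      exact dvd_sub_self_left.2 (dvd_pow h two_ne_zero)
    exact hpp.dvd_of_dvd_pow ((hpp.dvd_or_dvd this).resolve_left hpD)
  have hb : ¬ (p : ℤ) ∣ b := by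
    intro h
    refine key ?_ h
    have : (p : ℤ) ∣ a ^ 2 := by
      rw [show a ^ 2 = p - b * (D * b) by rw [← hab]; ring]
      exact dvd_sub_self_left.2 (h.mul_right _)
    exact hpp.dvd_of_dvd_pow this
  have h1 := split_aux hD hp hab n
  have h2 : ((rep D (p * n)).filter fun v => (p : ℤ) ∣ a * v.2 + b * v.1).card = (rep D n).card := by
    rw [← h1, ← rep_conj hD (p * n) (fun v => (p : ℤ) ∣ a * v.2 - b * v.1)]
    congr 1
    refine Finset.filter_congr fun v _ => ?_
    rw [← dvd_neg]; ring_nf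
  have h3 : (rep D (p * n)).filter (fun v => (p : ℤ) ∣ a * v.2 - b * v.1) ∪
      (rep D (p * n)).filter (fun v => (p : ℤ) ∣ a * v.2 + b * v.1) = rep D (p * n) := by
    rw [← Finset.filter_or, Finset.filter_eq_self]
    rintro ⟨x, y⟩ h
    rw [mem_rep hD] at h
    push_cast at h
    apply hpp.dvd_or_dvd
    refine ⟨y ^ 2 - b ^ 2 * n, ?_⟩
    linear_combination y ^ 2 * hab - b ^ 2 * h
  have h4 : (rep D (p * n)).filter (fun v => (p : ℤ) ∣ a * v.2 - b * v.1) ∩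
      (rep D (p * n)).filter (fun v => (p : ℤ) ∣ a * v.2 + b * v.1) =
      (rep D (p * n)).filter fun v => (p : ℤ) ∣ v.1 ∧ (p : ℤ) ∣ v.2 := by
    rw [← Finset.filter_and]
    refine Finset.filter_congr fun v _ => ?_
    constructor
    · rintro ⟨h, h'⟩
      have e1 : (p : ℤ) ∣ 2 * (a * v.2) := by
        have := dvd_add h h'
        rwa [show a * v.2 - b * v.1 + (a * v.2 + b * v.1) = 2 * (a * v.2) by ring] at this
      have e2 : (p : ℤ) ∣ 2 * (b * v.1) := by
        have := dvd_sub h' h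
        rwa [show a * v.2 + b * v.1 - (a * v.2 - b * v.1) = 2 * (b * v.1) by ring] at this
      exact ⟨(hpp.dvd_or_dvd ((hpp.dvd_or_dvd e2).resolve_left hp2')).resolve_left hb,
        (hpp.dvd_or_dvd ((hpp.dvd_or_dvd e1).resolve_left hp2')).resolve_left ha⟩
    · rintro ⟨h, h'⟩
      exact ⟨dvd_sub (h'.mul_left _) (h.mul_left _), dvd_add (h'.mul_left _) (h.mul_left _)⟩
  have h5 := Finset.card_union_add_card_inter
    ((rep D (p * n)).filter (fun v => (p : ℤ) ∣ a * v.2 - b * v.1))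
    ((rep D (p * n)).filter (fun v => (p : ℤ) ∣ a * v.2 + b * v.1))
  rw [h3, h4, h1, h2] at h5
  have h6 := rep_both hD hp.ne_zero n
  rw [← h6]
  simp only [r]
  omega

/-- If `p ∣ x² + D y²` forces `p ∣ x` and `p ∣ y`, then all representations of `pn` are `p` times those
of `n/p`. -/
lemma r_inert {D : ℤ} (hD : 0 < D) {p : ℕ} (hp : p.Prime)
    (hi : ∀ x y : ℤ, (p : ℤ) ∣ x ^ 2 + D * y ^ 2 → (p : ℤ) ∣ x ∧ (p : ℤ) ∣ y) (n : ℕ) :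
    r D (p * n) = gext (r D) p n := by
  rw [← rep_both hD hp.ne_zero n, r, Finset.filter_true_of_mem]
  rintro ⟨x, y⟩ h
  rw [mem_rep hD] at h
  exact hi x y ⟨n, by rw [h]; push_cast; rfl⟩

lemma r1_two (n : ℕ) : r 1 (2 * n) = r 1 n := by
  simp only [r]
  norm_cast
  symm
  refine Finset.card_nbij' (fun v => (v.1 - v.2, v.1 + v.2))
    (fun v => ((v.1 + v.2) / 2, (v.2 - v.1) / 2)) ?_ ?_ ?_ ?_
  · rintro ⟨x, y⟩ h
    simp only [Finset.mem_coe, mem_rep one_pos] at h ⊢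
    push_cast
    rw [← h]; ring
  · rintro ⟨x, y⟩ h
    simp only [Finset.mem_coe, mem_rep one_pos] at h ⊢
    push_cast at h
    have hpar : (x + y) % 2 = 0 := by
      have h1 : (x ^ 2 + 1 * y ^ 2) % 2 = 0 := by omega
      rcases Int.emod_two_eq_zero_or_one x with hx | hx <;>
      rcases Int.emod_two_eq_zero_or_one y with hy | hy <;>
      simp [pow_two, Int.add_emod, Int.mul_emod, hx, hy] at h1 ⊢
    obtain ⟨k, hk⟩ := Int.dvd_of_emod_eq_zero hpar
    obtain rfl : x = 2 * k - y := by linarith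
    rw [show (2 * k - y + y) / 2 = k by omega, show (y - (2 * k - y)) / 2 = y - k by omega]
    linarith
  · rintro ⟨x, y⟩ h
    simp only [Prod.mk.injEq]
    omega
  · rintro ⟨x, y⟩ h
    simp only [Finset.mem_coe, mem_rep one_pos] at h
    push_cast at h
    have hpar : (x + y) % 2 = 0 := by
      have h1 : (x ^ 2 + 1 * y ^ 2) % 2 = 0 := by omega
      rcases Int.emod_two_eq_zero_or_one x with hx | hx <;>
      rcases Int.emod_two_eq_zero_or_one y with hy | hy <;>
      simp [pow_two, Int.add_emod, Int.mul_emod, hx, hy] at h1 ⊢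
    simp only [Prod.mk.injEq]
    omega

lemma r3_three (n : ℕ) : r 3 (3 * n) = r 3 n := by
  simp only [r]
  norm_cast
  symm
  refine Finset.card_nbij' (fun v => (3 * v.2, v.1))
    (fun v => (v.2, v.1 / 3)) ?_ ?_ ?_ ?_
  · rintro ⟨x, y⟩ h
    simp only [Finset.mem_coe, mem_rep three_pos] at h ⊢
    push_cast
    rw [← h]; ring
  · rintro ⟨x, y⟩ h
    simp only [Finset.mem_coe, mem_rep three_pos] at h ⊢
    push_cast at h
    obtain ⟨k, rfl⟩ : (3 : ℤ) ∣ x := Int.prime_three.dvd_of_dvd_pow (n := 2) ⟨n - y ^ 2, by linarith⟩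
    rw [Int.mul_ediv_cancel_left _ three_ne_zero]
    linarith
  · rintro ⟨x, y⟩ h
    simp
  · rintro ⟨x, y⟩ h
    simp only [Finset.mem_coe, mem_rep three_pos] at h
    push_cast at h
    obtain ⟨k, rfl⟩ : (3 : ℤ) ∣ x := Int.prime_three.dvd_of_dvd_pow (n := 2) ⟨n - y ^ 2, by linarith⟩
    simp

/-- Thue's argument: by pigeonhole there are `x`, `y`, not both zero and of size below `√p`, with
`x² ≡ -3y²` modulo `p`, so `x² + 3y²` is `p`, `2p` or `3p`; the second is excluded modulo `4` and the
third reduces to the first. -/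
lemma thue_three {p : ℕ} (hp : p.Prime) (hp2 : p ≠ 2) (h : p % 3 = 1) :
    ∃ a b : ℤ, a ^ 2 + 3 * b ^ 2 = p := by
  have := Fact.mk hp
  have hls : legendreSym p (-3) = 1 := by
    have hodd := hp.odd_of_ne_two hp2
    rw [jacobiSym.legendreSym.to_jacobiSym, jacobiSym.mod_right _ hodd]
    have : p % 12 = 1 ∨ p % 12 = 7 := by obtain ⟨k, rfl⟩ := hodd; omega
    rcases this with h | h <;> simp [h] <;> norm_num
  have h0 : ((-3 : ℤ) : ZMod p) ≠ 0 := by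
    intro h0
    rw [(legendreSym.eq_zero_iff p (-3)).2 h0] at hls
    exact zero_ne_one hls
  obtain ⟨s, hs⟩ := (legendreSym.eq_one_iff p h0).1 hls
  set k := Nat.sqrt p with hk
  have hkp : p < (k + 1) ^ 2 := by rw [pow_two]; exact Nat.lt_succ_sqrt p
  have hkp' : k * k ≤ p := Nat.sqrt_le p
  obtain ⟨u, hu, v, hv, huv, heq⟩ := Finset.exists_ne_map_eq_of_card_lt_of_maps_to
    (s := Finset.range (k + 1) ×ˢ Finset.range (k + 1)) (t := (Finset.univ : Finset (ZMod p)))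
    (f := fun w => (w.1 : ZMod p) - s * w.2)
    (by rw [Finset.card_product, Finset.card_range, Finset.card_univ, ZMod.card, ← pow_two]
        exact hkp) (fun _ _ => Finset.mem_univ _)
  simp only [Finset.mem_product, Finset.mem_range] at hu hv
  set x : ℤ := (u.1 : ℤ) - v.1 with hx
  set y : ℤ := (u.2 : ℤ) - v.2 with hy
  have hd : (p : ℤ) ∣ x ^ 2 + 3 * y ^ 2 := by
    rw [← ZMod.intCast_zmod_eq_zero_iff_dvd]
    push_cast [hx, hy] at hs ⊢
    have e : (u.1 : ZMod p) - v.1 = s * (u.2 - v.2) := by linear_combination heq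
    rw [e]; linear_combination -((u.2 : ZMod p) - v.2) ^ 2 * hs
  have hlt : x ^ 2 + 3 * y ^ 2 < 4 * p := by
    have hkk : ((k : ℤ)) ^ 2 ≤ p := by rw [pow_two]; exact_mod_cast hkp'
    have hx2 : x ^ 2 ≤ (k : ℤ) ^ 2 := by
      apply sq_le_sq'  <;> omega
    have hy2 : y ^ 2 ≤ (k : ℤ) ^ 2 := by
      apply sq_le_sq'  <;> omega
    have hne : ((k : ℤ)) ^ 2 ≠ p := by
      intro hh
      have : p = k * k := by rw [← pow_two]; exact_mod_cast hh.symm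
      exact hp.prime.irreducible.not_isSquare ⟨k, this⟩
    have : ((k : ℤ)) ^ 2 < p := lt_of_le_of_ne hkk hne
    linarith
  have hpos : 0 < x ^ 2 + 3 * y ^ 2 := by
    rcases eq_or_ne x 0 with h | h
    · have : y ≠ 0 := by
        intro h'
        apply huv
        ext <;> omega
      positivity
    · positivity
  obtain ⟨c, hc⟩ := hd
  have hp0 : (0 : ℤ) < p := by exact_mod_cast hp.pos
  have hc1 : 0 < c := by rw [hc] at hpos; exact pos_of_mul_pos_right hpos hp0.le
  have hc2 : c < 4 := by rw [hc] at hlt; nlinarith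
  have hpo : (p : ℤ) % 2 = 1 := by
    have := Nat.odd_iff.1 (hp.odd_of_ne_two hp2); omega
  interval_cases c
  · exact ⟨x, y, by linarith⟩
  · exfalso
    obtain ⟨q, hq⟩ : ∃ q : ℤ, p = 2 * q + 1 := ⟨p / 2, by omega⟩
    rw [hq] at hc
    rcases Int.even_or_odd' x with ⟨x', h1 | h1⟩ <;> rcases Int.even_or_odd' y with ⟨y', h2 | h2⟩ <;>
      rw [h1, h2] at hc <;> ring_nf at hc <;> omega
  · obtain ⟨x', hx'⟩ : (3 : ℤ) ∣ x := Int.prime_three.dvd_of_dvd_pow (n := 2) ⟨p - y ^ 2, by linarith⟩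
    refine ⟨y, x', ?_⟩
    rw [hx'] at hc
    linarith

lemma legendre_neg_three {p : ℕ} [Fact p.Prime] (hp2 : p ≠ 2) (h : p % 3 = 2) :
    legendreSym p (-3) = -1 := by
  have hodd := (Fact.out : p.Prime).odd_of_ne_two hp2
  rw [jacobiSym.legendreSym.to_jacobiSym, jacobiSym.mod_right _ hodd]
  have : p % 12 = 5 ∨ p % 12 = 11 := by obtain ⟨k, rfl⟩ := hodd; omega
  rcases this with h | h <;> simp [h] <;> norm_num

lemma legendre_neg_one {p : ℕ} [Fact p.Prime] (h : p % 4 = 3) :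
    legendreSym p (-1) = -1 := by
  rw [legendreSym.eq_neg_one_iff]
  push_cast
  rw [ZMod.exists_sq_eq_neg_one_iff]
  simp [h]

lemma chi4_cast {m : ℕ} : chi4 (m : ZMod 4) = if m % 4 = 1 then 1 else if m % 4 = 3 then -1 else 0 := by
  rw [← ZMod.natCast_mod m 4]
  have := Nat.mod_lt m (show 4 > 0 by norm_num)
  interval_cases m % 4 <;> rfl

lemma chi3_cast {m : ℕ} : chi3 (m : ZMod 3) = if m % 3 = 1 then 1 else if m % 3 = 2 then -1 else 0 := by
  rw [← ZMod.natCast_mod m 3]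
  have := Nat.mod_lt m (show 3 > 0 by norm_num)
  interval_cases m % 3 <;> rfl

lemma r1_rec (p m : ℕ) (hp : p.Prime) :
    r 1 (p * m) = (1 + chi4 p) * r 1 m - chi4 p * gext (r 1) p m := by
  have := Fact.mk hp
  rw [chi4_cast]
  by_cases hp2 : p = 2
  · subst hp2; simp [r1_two]
  have hodd := Nat.odd_iff.1 (hp.odd_of_ne_two hp2)
  have h4 : p % 4 = 1 ∨ p % 4 = 3 := by omega
  rcases h4 with h | h
  · obtain ⟨a, b, hab⟩ := Nat.Prime.sq_add_sq (p := p) (by omega)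
    rw [if_pos h, r_split one_pos hp hp2 _ (a := a) (b := b) (by rw [one_mul]; exact_mod_cast hab)]
    · ring
    · intro h1
      have : p ∣ 1 := by exact_mod_cast h1
      exact hp.one_lt.ne' (Nat.dvd_one.1 this)
  · rw [if_neg (by omega), if_pos h, r_inert one_pos hp]
    · ring
    · intro x y hxy
      refine legendreSym.prime_dvd_of_eq_neg_one (legendre_neg_one h) (x := x) (y := y) ?_
      convert hxy using 1; ring

lemma r3_rec (p m : ℕ) (hp : p.Prime) (hp2 : p ≠ 2) :
    r 3 (p * m) = (1 + chi3 p) * r 3 m - chi3 p * gext (r 3) p m := by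
  have := Fact.mk hp
  rw [chi3_cast]
  by_cases hp3 : p = 3
  · subst hp3; simp [r3_three]
  have h0 : p % 3 ≠ 0 := fun h => hp3 ((Nat.prime_dvd_prime_iff_eq Nat.prime_three hp).1
    (Nat.dvd_of_mod_eq_zero h)).symm
  have h3 : p % 3 = 1 ∨ p % 3 = 2 := by omega
  rcases h3 with h | h
  · obtain ⟨a, b, hab⟩ := thue_three hp hp2 h
    rw [if_pos h, r_split three_pos hp hp2 _ hab]
    · ring
    · intro h1
      have h1' : p ∣ 3 := by exact_mod_cast h1
      exact hp3 ((Nat.prime_dvd_prime_iff_eq hp Nat.prime_three).1 h1')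
  · rw [if_neg (by omega), if_pos h, r_inert three_pos hp]
    · ring
    · intro x y hxy
      refine legendreSym.prime_dvd_of_eq_neg_one (legendre_neg_three hp2 h) (x := x) (y := y) ?_
      convert hxy using 1; ring

theorem r1_eq (n : ℕ) (hn : n ≠ 0) : r 1 n = 4 * g4 n := by
  refine rec_unique (fun _ => True) 4 (fun d => chi4 d) (r 1) g4 ?_ ?_ ?_ n hn (fun _ _ _ => trivial)
  · decide
  · intro p m hp _ hm; exact r1_rec p m hp
  · intro p m hp _ hm
    exact G_rec (fun d => chi4 d) p m hp (fun k => by push_cast; exact chi4_mul _ _) hm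

theorem r3_eq (n : ℕ) (hn : Odd n) : r 3 n = 2 * g3 n := by
  refine rec_unique (fun p => p ≠ 2) 2 (fun d => chi3 d) (r 3) g3 ?_ ?_ ?_ n ?_ ?_
  · decide
  · intro p m hp hp2 hm; exact r3_rec p m hp hp2
  · intro p m hp _ hm
    exact G_rec (fun d => chi3 d) p m hp (fun k => by push_cast; exact chi3_mul _ _) hm
  · rintro rfl; simp at hn
  · rintro p _ hd rfl
    rw [Nat.odd_iff] at hn; omega

/-! ### Representations of multiples of `4` by `X² + 3Y²` -/

lemma par3 {X Y m : ℤ} (h : X ^ 2 + 3 * Y ^ 2 = 4 * m) : X % 2 = Y % 2 := by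
  rcases Int.even_or_odd' X with ⟨x', h1 | h1⟩ <;> rcases Int.even_or_odd' Y with ⟨y', h2 | h2⟩ <;>
      rw [h1, h2] at h ⊢ <;> ring_nf at h <;> omega

lemma opp3 {X Y m : ℤ} (hm : m % 2 = 1) (h : X ^ 2 + 3 * Y ^ 2 = m) : (X + Y) % 2 = 1 := by
  rcases Int.even_or_odd' X with ⟨x', h1 | h1⟩ <;> rcases Int.even_or_odd' Y with ⟨y', h2 | h2⟩ <;>
      rw [h1, h2] at h ⊢ <;> ring_nf at h <;> omega

/-- Multiplication by `1 + √-3` maps the representations of `m` by `X² + 3Y²` onto the odd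
representations of `4m` with `X ≡ Y (mod 4)`. -/
lemma rot_one (m : ℕ) (hm : Odd m) (f : ℤ → ℤ → ℤ) :
    ∑ v ∈ (rep 3 (4 * m)).filter (fun v => v.1 % 2 = 1 ∧ (v.1 - v.2) % 4 = 0), f v.1 v.2 =
      ∑ v ∈ rep 3 m, f (v.1 - 3 * v.2) (v.1 + v.2) := by
  have hm' : (m : ℤ) % 2 = 1 := by have := Nat.odd_iff.1 hm; omega
  symm
  refine Finset.sum_nbij' (fun v => (v.1 - 3 * v.2, v.1 + v.2))
    (fun v => (v.2 - (v.2 - v.1) / 4, (v.2 - v.1) / 4)) ?_ ?_ ?_ ?_ ?_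
  · rintro ⟨x, y⟩ h
    simp only [Finset.mem_filter, mem_rep three_pos] at h ⊢
    have := opp3 hm' h
    push_cast
    exact ⟨by rw [← h]; ring, by omega, by omega⟩
  · rintro ⟨x, y⟩ h
    simp only [Finset.mem_filter, mem_rep three_pos] at h ⊢
    obtain ⟨h, h1, h2⟩ := h
    obtain ⟨k, hk⟩ : ∃ k, y - x = 4 * k := ⟨(y - x) / 4, by omega⟩
    obtain rfl : x = y - 4 * k := by omega
    rw [show (y - (y - 4 * k)) / 4 = k by omega]
    push_cast at h
    linarith
  · rintro ⟨x, y⟩ h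
    simp only [Prod.mk.injEq]; omega
  · rintro ⟨x, y⟩ h
    simp only [Finset.mem_filter, mem_rep three_pos] at h ⊢
    simp only [Prod.mk.injEq]; omega
  · rintro ⟨x, y⟩ h; rfl

lemma rep_conj_sum (D : ℤ) (hD : 0 < D) (n : ℕ) (f : ℤ → ℤ → ℤ) :
    ∑ v ∈ rep D n, f v.1 v.2 = ∑ v ∈ rep D n, f v.1 (-v.2) := by
  refine Finset.sum_nbij' (fun v => (v.1, -v.2)) (fun v => (v.1, -v.2)) ?_ ?_ ?_ ?_ ?_
  · rintro ⟨x, y⟩ h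
    simp only [mem_rep hD, neg_sq] at h ⊢
    exact h
  · rintro ⟨x, y⟩ h
    simp only [mem_rep hD, neg_sq] at h ⊢
    exact h
  all_goals intro v _; simp

/-- Odd representations of `4m` satisfy `X ≡ Y` or `X ≡ -Y` modulo `4`, so there are two for each
representation of `m`. -/
lemma rot (m : ℕ) (hm : Odd m) (f : ℤ → ℤ → ℤ) :
    ∑ v ∈ (rep 3 (4 * m)).filter (fun v => v.1 % 2 = 1), f v.1 v.2 =
      ∑ v ∈ rep 3 m, (f (v.1 - 3 * v.2) (v.1 + v.2) + f (v.1 - 3 * v.2) (-(v.1 + v.2))) := by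
  rw [Finset.sum_add_distrib, ← rot_one m hm f, ← rot_one m hm (fun x y => f x (-y))]
  simp only [Finset.sum_filter]
  rw [rep_conj_sum 3 three_pos (4 * m)
    (fun x y => if x % 2 = 1 ∧ (x - y) % 4 = 0 then f x (-y) else 0), ← Finset.sum_add_distrib]
  refine Finset.sum_congr rfl ?_
  rintro ⟨x, y⟩ h
  rw [mem_rep three_pos] at h
  push_cast at h
  have := par3 h
  rw [neg_neg]
  dsimp only
  split_ifs <;> first | omega | simp

lemma even_part (m : ℕ) (f : ℤ → ℤ → ℤ) :
    ∑ v ∈ (rep 3 (4 * m)).filter (fun v => v.1 % 2 = 0), f v.1 v.2 =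
      ∑ v ∈ rep 3 m, f (2 * v.1) (2 * v.2) := by
  symm
  refine Finset.sum_nbij' (fun v => (2 * v.1, 2 * v.2)) (fun v => (v.1 / 2, v.2 / 2)) ?_ ?_ ?_ ?_ ?_
  · rintro ⟨x, y⟩ h
    simp only [Finset.mem_filter, mem_rep three_pos] at h ⊢
    push_cast
    exact ⟨by rw [← h]; ring, by omega⟩
  · rintro ⟨x, y⟩ h
    simp only [Finset.mem_filter, mem_rep three_pos] at h ⊢
    obtain ⟨h, h1⟩ := h
    push_cast at h
    have := par3 h
    obtain ⟨k, rfl⟩ : ∃ k, x = 2 * k := ⟨x / 2, by omega⟩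
    obtain ⟨l, rfl⟩ : ∃ k, y = 2 * k := ⟨y / 2, by omega⟩
    rw [Int.mul_ediv_cancel_left _ two_ne_zero, Int.mul_ediv_cancel_left _ two_ne_zero]
    linarith
  · rintro ⟨x, y⟩ h
    simp
  · rintro ⟨x, y⟩ h
    simp only [Finset.mem_filter, mem_rep three_pos] at h ⊢
    obtain ⟨h, h1⟩ := h
    push_cast at h
    have := par3 h
    simp only [Prod.mk.injEq]; omega
  · rintro ⟨x, y⟩ h; rfl

lemma r_eq_sum (D : ℤ) (n : ℕ) : r D n = ∑ v ∈ rep D n, 1 := by simp [r]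

lemma r_four_odd (m : ℕ) (hm : Odd m) : r 3 (4 * m) = 3 * r 3 m := by
  have h1 := rot m hm (fun _ _ => 1)
  have h2 := even_part m (fun _ _ => 1)
  rw [Finset.sum_add_distrib, ← r_eq_sum] at h1
  rw [← r_eq_sum] at h2
  rw [r_eq_sum, ← Finset.sum_filter_add_sum_filter_not _ (fun v => v.1 % 2 = 1), h1]
  have : ((rep 3 (4 * m)).filter fun v => ¬ v.1 % 2 = 1) = (rep 3 (4 * m)).filter fun v => v.1 % 2 = 0 := by
    refine Finset.filter_congr fun v _ => by omega
  rw [this, h2]; ring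

lemma r_four_even (m : ℕ) (hm : Even m) : r 3 (4 * m) = r 3 m := by
  have h2 := even_part m (fun _ _ => 1)
  rw [← r_eq_sum] at h2
  rw [← h2, r_eq_sum, Finset.filter_true_of_mem]
  rintro ⟨X, Y⟩ h
  rw [mem_rep three_pos] at h
  push_cast at h
  obtain ⟨k, rfl⟩ := hm
  push_cast at h
  dsimp only
  rcases Int.even_or_odd' X with ⟨x', h1 | h1⟩ <;> rcases Int.even_or_odd' Y with ⟨y', h2 | h2⟩
  · omega
  · omega
  · rw [h1, h2] at h; ring_nf at h; omega
  · exfalso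
    have e1 : 2 ∣ x' ^ 2 + x' := by rw [show x' ^ 2 + x' = x' * (x' + 1) by ring]; exact (Int.even_mul_succ_self x').two_dvd
    have e2 : 2 ∣ y' ^ 2 + y' := by rw [show y' ^ 2 + y' = y' * (y' + 1) by ring]; exact (Int.even_mul_succ_self y').two_dvd
    rw [h1, h2] at h; ring_nf at h; omega

lemma r_two_mod_four (m : ℕ) (hm : m % 4 = 2) : r 3 m = 0 := by
  simp only [r, Int.natCast_eq_zero, Finset.card_eq_zero]
  rw [Finset.eq_empty_iff_forall_notMem]
  rintro ⟨X, Y⟩ h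
  rw [mem_rep three_pos] at h
  have hm : (m : ℤ) % 4 = 2 := by omega
  rcases Int.even_or_odd' X with ⟨x', h1 | h1⟩ <;> rcases Int.even_or_odd' Y with ⟨y', h2 | h2⟩ <;>
  rw [h1, h2] at h <;> ring_nf at h <;> omega

lemma g3_two (m : ℕ) (hm : m ≠ 0) : g3 (2 * m) = gext g3 2 m := by
  have := G_rec (fun d => chi3 d) 2 m Nat.prime_two (fun k => by push_cast; exact chi3_mul _ _) hm
  rw [show chi3 ((2 : ℕ) : ZMod 3) = -1 by rfl] at this
  change g3 (2 * m) = (1 + -1) * g3 m - (-1) * gext g3 2 m at this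
  rw [this]; ring

lemma g3_four (m : ℕ) (hm : m ≠ 0) : g3 (4 * m) = g3 m := by
  rw [show 4 * m = 2 * (2 * m) by ring, g3_two _ (by omega), gext, if_pos (dvd_mul_right _ _),
    Nat.mul_div_cancel_left _ two_pos]

lemma g3_two_mod_four (m : ℕ) (hm : m % 4 = 2) : g3 m = 0 := by
  obtain ⟨k, rfl⟩ : ∃ k, m = 2 * k := ⟨m / 2, by omega⟩
  rw [g3_two _ (by omega), gext, if_neg (by omega)]

/-- Removing factors `4` from `m` reduces this to odd `m`, where there are `3 r 3 m` representations of
`4m` and `r3_eq` applies. -/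
lemma r_four (m : ℕ) (hm : m ≠ 0) : r 3 (4 * m) = 6 * g3 m := by
  induction m using Nat.strong_induction_on with
  | _ m ih =>
    rcases Nat.even_or_odd m with h | h
    · rw [r_four_even m h]
      by_cases h2 : m % 4 = 2
      · rw [r_two_mod_four m h2, g3_two_mod_four m h2]; rfl
      · obtain ⟨k, rfl⟩ : ∃ k, m = 4 * k := ⟨m / 4, by rw [Nat.even_iff] at h; omega⟩
        rw [ih k (by omega) (by omega), g3_four _ (by omega)]
    · rw [r_four_odd m h, r3_eq m h]; ring

theorem r3_all (n : ℕ) (hn : n ≠ 0) : r 3 n = 2 * g3 n + 4 * gext g3 4 n := by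
  have h : n % 2 = 1 ∨ n % 4 = 2 ∨ n % 4 = 0 := by omega
  rcases h with h | h | h
  · rw [r3_eq n (Nat.odd_iff.2 h), gext, if_neg (by omega)]; ring
  · rw [r_two_mod_four n h, g3_two_mod_four n h, gext, if_neg (by omega)]; ring
  · obtain ⟨k, rfl⟩ : ∃ k, n = 4 * k := ⟨n / 4, by omega⟩
    rw [r_four k (by omega), g3_four k (by omega), gext, if_pos (dvd_mul_right _ _),
      Nat.mul_div_cancel_left _ (by norm_num)]; ring

/-! ### Involutions on the solutions of `y² + 4ef = M` -/

/-- The quadratic character `(2/·)` modulo `8`. -/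
def chi8 : ZMod 8 → ℤ := ![0, 1, 0, -1, 0, -1, 0, 1]

/-- The sign `(-1)^e` for an integer exponent `e`. -/
def sg (e : ℤ) : ℤ := if e % 2 = 0 then 1 else -1

lemma chi8_neg : ∀ a : ZMod 8, chi8 (-a) = chi8 a := by decide

lemma sg_sub (a b : ℤ) : sg (a - b) = sg a * sg b := by
  unfold sg
  split_ifs <;> omega

/-- Expresses a product of characters in `y` and `e` through translates by `±2e`, a finite check
modulo `8`. -/
lemma chi8_step (y e : ℤ) :
    2 * (chi4 (e : ZMod 4) * chi8 (y : ZMod 8)) =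
      -(chi4 (y : ZMod 4) * (chi8 ((y + 2 * e : ℤ) : ZMod 8) - chi8 ((y - 2 * e : ℤ) : ZMod 8))) := by
  have h (x : ℤ) : (x : ZMod 4) = ZMod.castHom (show 4 ∣ 8 by norm_num) (ZMod 4) (x : ZMod 8) :=
    (map_intCast _ _).symm
  rw [h e, h y]
  push_cast
  generalize (e : ZMod 8) = e
  generalize (y : ZMod 8) = y
  revert e y
  decide

lemma chi4_sub_two (Y e : ℤ) :
    chi4 ((Y - 2 * e : ℤ) : ZMod 4) = chi4 (Y : ZMod 4) * sg e := by
  rcases Int.even_or_odd' e with ⟨k, rfl | rfl⟩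
  · have : sg (2 * k) = 1 := by simp [sg]
    rw [this]
    push_cast
    rw [show (Y : ZMod 4) - 2 * (2 * k) = Y - 4 * k by ring, show (4 : ZMod 4) = 0 by rfl]
    simp
  · have : sg (2 * k + 1) = -1 := by rw [sg, if_neg (by omega)]
    rw [this]
    push_cast
    rw [show (Y : ZMod 4) - 2 * (2 * k + 1) = Y - 2 - 4 * k by ring, show (4 : ZMod 4) = 0 by rfl,
      zero_mul, sub_zero]
    generalize (Y : ZMod 4) = y
    revert y
    decide

lemma chi8_sq {y t : ℤ} (h : y ^ 2 = 8 * t + 1) : chi8 (y : ZMod 8) = sg t := by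
  obtain ⟨q, i, hi, rfl⟩ : ∃ q i : ℤ, (0 ≤ i ∧ i < 8) ∧ y = 8 * q + i :=
    ⟨y / 8, y % 8, by omega, by omega⟩
  have hc : ((8 * q + i : ℤ) : ZMod 8) = (i : ZMod 8) := by
    push_cast
    rw [show (8 : ZMod 8) = 0 by rfl]; ring
  rw [hc]
  obtain ⟨h0, h8⟩ := hi
  unfold sg
  interval_cases i <;> ring_nf at h <;> first | omega | skip
  all_goals split_ifs <;> first | omega | rfl

/-- The solutions `(y, e, f)` of `y² + 8ef = M` with `y` odd and `e`, `f` positive. -/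
noncomputable def Sg (M : ℤ) : Finset (ℤ × ℤ × ℤ) :=
  (Finset.Icc (-M) M ×ˢ Finset.Icc (-M) M ×ˢ Finset.Icc (-M) M).filter fun v =>
    v.1 % 2 = 1 ∧ 1 ≤ v.2.1 ∧ 1 ≤ v.2.2 ∧ v.1 ^ 2 + 8 * v.2.1 * v.2.2 = M

lemma mem_Sg {M y e f : ℤ} :
    (y, e, f) ∈ Sg M ↔ y % 2 = 1 ∧ 1 ≤ e ∧ 1 ≤ f ∧ y ^ 2 + 8 * e * f = M := by
  simp only [Sg, Finset.mem_filter, Finset.mem_product, Finset.mem_Icc, and_iff_right_iff_imp]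
  rintro ⟨-, h1, h2, h⟩
  refine ⟨⟨?_, ?_⟩, ⟨?_, ?_⟩, ?_, ?_⟩ <;> nlinarith [mul_pos (show 0 < e by omega) (show 0 < f by omega)]

/-- The solutions `(y, e, f)` of `y² + 4ef = M` with `y` and `e + f` odd, inside a box. The box is closed
under swapping `e`, `f` and under sign changes, and its size `6M` leaves room for all the solutions
obtained from `Sg M` in `Sg_step2`. -/
noncomputable def Om (M : ℤ) : Finset (ℤ × ℤ × ℤ) :=
  (Finset.Icc (-(6 * M)) (6 * M) ×ˢ Finset.Icc (-(6 * M)) (6 * M) ×ˢ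
    Finset.Icc (-(6 * M)) (6 * M)).filter fun v =>
    v.1 % 2 = 1 ∧ (v.2.1 + v.2.2) % 2 = 1 ∧ v.1 ^ 2 + 4 * v.2.1 * v.2.2 = M

lemma mem_Om {M y e f : ℤ} :
    (y, e, f) ∈ Om M ↔ ((-(6 * M) ≤ y ∧ y ≤ 6 * M) ∧ (-(6 * M) ≤ e ∧ e ≤ 6 * M) ∧
      -(6 * M) ≤ f ∧ f ≤ 6 * M) ∧ y % 2 = 1 ∧ (e + f) % 2 = 1 ∧ y ^ 2 + 4 * e * f = M := by
  simp only [Om, Finset.mem_filter, Finset.mem_product, Finset.mem_Icc]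

lemma Sg_step1 (M : ℤ) :
    ∑ v ∈ Sg M, chi4 (v.2.1 : ZMod 4) * chi8 (v.1 : ZMod 8) =
      -∑ v ∈ Sg M, chi4 (v.1 : ZMod 4) * chi8 ((v.1 + 2 * v.2.1 : ℤ) : ZMod 8) := by
  have h1 : ∑ v ∈ Sg M, chi4 (v.1 : ZMod 4) * chi8 ((v.1 - 2 * v.2.1 : ℤ) : ZMod 8) =
      -∑ v ∈ Sg M, chi4 (v.1 : ZMod 4) * chi8 ((v.1 + 2 * v.2.1 : ℤ) : ZMod 8) := by
    rw [← Finset.sum_neg_distrib]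
    refine Finset.sum_nbij' (fun v => (-v.1, v.2)) (fun v => (-v.1, v.2)) ?_ ?_ ?_ ?_ ?_
    · rintro ⟨y, e, f⟩ h
      rw [mem_Sg] at h ⊢
      exact ⟨by omega, h.2.1, h.2.2.1, by rw [neg_sq]; exact h.2.2.2⟩
    · rintro ⟨y, e, f⟩ h
      rw [mem_Sg] at h ⊢
      exact ⟨by omega, h.2.1, h.2.2.1, by rw [neg_sq]; exact h.2.2.2⟩
    · simp
    · simp
    · rintro ⟨y, e, f⟩ h
      dsimp only
      rw [← chi8_neg, ← Int.cast_neg, show -(y - 2 * e) = -y + 2 * e by ring, Int.cast_neg y,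
        chi4_neg]
      ring
  have h2 : 2 * ∑ v ∈ Sg M, chi4 (v.2.1 : ZMod 4) * chi8 (v.1 : ZMod 8) =
      -∑ v ∈ Sg M, chi4 (v.1 : ZMod 4) * chi8 ((v.1 + 2 * v.2.1 : ℤ) : ZMod 8) +
      ∑ v ∈ Sg M, chi4 (v.1 : ZMod 4) * chi8 ((v.1 - 2 * v.2.1 : ℤ) : ZMod 8) := by
    rw [Finset.mul_sum, ← Finset.sum_neg_distrib, ← Finset.sum_add_distrib]
    refine Finset.sum_congr rfl fun v _ => ?_
    rw [chi8_step]; ring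
  linarith

/-- The character `(-2/·)` modulo `8`, an odd function. -/
def th (Y : ℤ) : ℤ := chi4 (Y : ZMod 4) * chi8 (Y : ZMod 8)

lemma th_neg (Y : ℤ) : th (-Y) = -th Y := by
  simp only [th, Int.cast_neg, chi4_neg, chi8_neg]; ring

/-- The substitution `(y, e, f) ↦ (y + 2e, e, e - (y + 2e) + 2f)` carries `y² + 8ef` to `y² + 4ef`. -/
lemma Sg_step2 (M : ℤ) :
    ∑ v ∈ Sg M, chi4 (v.1 : ZMod 4) * chi8 ((v.1 + 2 * v.2.1 : ℤ) : ZMod 8) =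
      ∑ v ∈ Om M, if 1 ≤ v.2.1 ∧ 2 ≤ v.2.2 - v.2.1 + v.1 then th v.1 * sg v.2.1 else 0 := by
  rw [← Finset.sum_filter]
  refine Finset.sum_nbij' (fun v => (v.1 + 2 * v.2.1, v.2.1, v.2.1 - (v.1 + 2 * v.2.1) + 2 * v.2.2))
    (fun v => (v.1 - 2 * v.2.1, v.2.1, (v.2.2 - v.2.1 + v.1) / 2)) ?_ ?_ ?_ ?_ ?_
  · rintro ⟨y, e, f⟩ h
    rw [Finset.mem_filter, mem_Om]
    have hb := h
    simp only [Sg, Finset.mem_filter, Finset.mem_product, Finset.mem_Icc] at hb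
    rw [mem_Sg] at h
    obtain ⟨h0, h1, h2, h3⟩ := h
    dsimp only at hb ⊢
    refine ⟨⟨by omega, by omega, by omega, by rw [← h3]; ring⟩, h1, by omega⟩
  · rintro ⟨y, e, f⟩ h
    rw [Finset.mem_filter, mem_Om] at h
    rw [mem_Sg]
    obtain ⟨⟨-, h0, h1, h2⟩, h3, h4⟩ := h
    dsimp only at h3 h4
    dsimp only
    obtain ⟨k, hk⟩ : ∃ k, f - e + y = 2 * k := ⟨(f - e + y) / 2, by omega⟩
    obtain rfl : f = 2 * k + e - y := by omega
    rw [show (2 * k + e - y - e + y) / 2 = k by omega]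
    exact ⟨by omega, h3, by omega, by rw [← h2]; ring⟩
  · rintro ⟨y, e, f⟩ h
    refine Prod.ext ?_ (Prod.ext ?_ ?_) <;> dsimp only <;> omega
  · rintro ⟨y, e, f⟩ h
    rw [Finset.mem_filter, mem_Om] at h
    dsimp only at h
    refine Prod.ext ?_ (Prod.ext ?_ ?_) <;> dsimp only <;> omega
  · rintro ⟨y, e, f⟩ h
    dsimp only
    have := chi4_sub_two (y + 2 * e) e
    rw [show y + 2 * e - 2 * e = y by ring] at this
    rw [this, th]; ring

lemma Om_swap (M : ℤ) (f : ℤ → ℤ → ℤ → ℤ) :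
    ∑ v ∈ Om M, f v.1 v.2.1 v.2.2 = ∑ v ∈ Om M, f v.1 v.2.2 v.2.1 := by
  refine Finset.sum_nbij' (fun v => (v.1, v.2.2, v.2.1)) (fun v => (v.1, v.2.2, v.2.1)) ?_ ?_ ?_ ?_ ?_
  · rintro ⟨y, e, f⟩ h
    rw [mem_Om] at h
    dsimp only
    rw [mem_Om]
    exact ⟨by tauto, h.2.1, by omega, by rw [← h.2.2.2]; ring⟩
  · rintro ⟨y, e, f⟩ h
    rw [mem_Om] at h
    dsimp only
    rw [mem_Om]
    exact ⟨by tauto, h.2.1, by omega, by rw [← h.2.2.2]; ring⟩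
  all_goals simp

lemma Om_negY (M : ℤ) (f : ℤ → ℤ → ℤ → ℤ) :
    ∑ v ∈ Om M, f v.1 v.2.1 v.2.2 = ∑ v ∈ Om M, f (-v.1) v.2.1 v.2.2 := by
  refine Finset.sum_nbij' (fun v => (-v.1, v.2.1, v.2.2)) (fun v => (-v.1, v.2.1, v.2.2)) ?_ ?_ ?_ ?_ ?_
  · rintro ⟨y, e, f⟩ h
    rw [mem_Om] at h
    dsimp only
    rw [mem_Om]
    exact ⟨by omega, by omega, by omega, by rw [← h.2.2.2]; ring⟩
  · rintro ⟨y, e, f⟩ h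
    rw [mem_Om] at h
    dsimp only
    rw [mem_Om]
    exact ⟨by omega, by omega, by omega, by rw [← h.2.2.2]; ring⟩
  all_goals simp

lemma Om_negE (M : ℤ) (f : ℤ → ℤ → ℤ → ℤ) :
    ∑ v ∈ Om M, f v.1 v.2.1 v.2.2 = ∑ v ∈ Om M, f v.1 (-v.2.1) (-v.2.2) := by
  refine Finset.sum_nbij' (fun v => (v.1, -v.2.1, -v.2.2)) (fun v => (v.1, -v.2.1, -v.2.2)) ?_ ?_ ?_ ?_ ?_
  · rintro ⟨y, e, f⟩ h
    rw [mem_Om] at h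
    dsimp only
    rw [mem_Om]
    exact ⟨by omega, by omega, by omega, by rw [← h.2.2.2]; ring⟩
  · rintro ⟨y, e, f⟩ h
    rw [mem_Om] at h
    dsimp only
    rw [mem_Om]
    exact ⟨by omega, by omega, by omega, by rw [← h.2.2.2]; ring⟩
  all_goals simp

lemma sg_opp {e f : ℤ} (h : (e + f) % 2 = 1) : sg f = -sg e := by
  unfold sg; split_ifs <;> omega

lemma sg_neg (e : ℤ) : sg (-e) = sg e := by
  unfold sg; split_ifs <;> omega

/-- The symmetries `e ↔ f`, `y ↦ -y` and `(e, f) ↦ (-e, -f)` of `Om M` reverse the sign of `th y * sg e`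
or pair off the regions involved, so that only two boundary regions, `f = e + y` and `f = 0`, survive. -/
lemma Om_step3 (M : ℤ) :
    (∑ v ∈ Om M, if 1 ≤ v.2.1 ∧ 2 ≤ v.2.2 - v.2.1 + v.1 then th v.1 * sg v.2.1 else 0) =
      (∑ v ∈ Om M, if 0 < v.1 ∧ 1 ≤ v.2.1 ∧ v.2.2 = v.2.1 + v.1 then th v.1 * sg v.2.1 else 0) +
      ∑ v ∈ Om M, if v.2.2 = 0 ∧ 1 ≤ v.2.1 ∧ v.2.1 + 2 ≤ v.1 then th v.1 * sg v.2.1 else 0 := by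
  have a1 : (∑ v ∈ Om M, if 1 ≤ v.2.1 ∧ 1 ≤ v.2.2 ∧ |v.2.1 - v.2.2| < v.1 then
      th v.1 * sg v.2.1 else 0) = 0 := by
    have h := Om_swap M (fun y e f => if 1 ≤ e ∧ 1 ≤ f ∧ |e - f| < y then th y * sg e else 0)
    have h2 : (∑ v ∈ Om M, if 1 ≤ v.2.2 ∧ 1 ≤ v.2.1 ∧ |v.2.2 - v.2.1| < v.1 then
        th v.1 * sg v.2.2 else 0) = -∑ v ∈ Om M, if 1 ≤ v.2.1 ∧ 1 ≤ v.2.2 ∧ |v.2.1 - v.2.2| < v.1 then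
        th v.1 * sg v.2.1 else 0 := by
      rw [← Finset.sum_neg_distrib]
      refine Finset.sum_congr rfl ?_
      rintro ⟨y, e, f⟩ hv
      rw [mem_Om] at hv
      dsimp only
      rw [sg_opp hv.2.2.1, abs_sub_comm]
      split_ifs <;> first | omega | ring
    linarith
  have a2 : (∑ v ∈ Om M, if 1 ≤ v.2.1 ∧ v.2.1 + |v.1| ≤ v.2.2 then th v.1 * sg v.2.1 else 0) = 0 := by
    have h := Om_negY M (fun y e f => if 1 ≤ e ∧ e + |y| ≤ f then th y * sg e else 0)
    have h2 : (∑ v ∈ Om M, if 1 ≤ v.2.1 ∧ v.2.1 + |-v.1| ≤ v.2.2 then th (-v.1) * sg v.2.1 else 0) =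
      -∑ v ∈ Om M, if 1 ≤ v.2.1 ∧ v.2.1 + |v.1| ≤ v.2.2 then th v.1 * sg v.2.1 else 0 := by
      rw [← Finset.sum_neg_distrib]
      refine Finset.sum_congr rfl ?_
      rintro ⟨y, e, f⟩ hv
      dsimp only
      rw [th_neg, abs_neg]
      split_ifs <;> ring
    linarith
  have a3 : (∑ v ∈ Om M, if v.1 < 0 ∧ 1 ≤ v.2.1 ∧ v.2.2 = v.2.1 + |v.1| then
      th v.1 * sg v.2.1 else 0) =
      -∑ v ∈ Om M, if 0 < v.1 ∧ 1 ≤ v.2.1 ∧ v.2.2 = v.2.1 + v.1 then th v.1 * sg v.2.1 else 0 := by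
    have h := Om_negY M (fun y e f => if y < 0 ∧ 1 ≤ e ∧ f = e + |y| then th y * sg e else 0)
    rw [h, ← Finset.sum_neg_distrib]
    refine Finset.sum_congr rfl ?_
    rintro ⟨y, e, f⟩ hv
    dsimp only
    rw [th_neg, abs_neg]
    rcases abs_cases y with h | h <;> rw [h.1] <;> split_ifs <;> first | omega | ring
  have a4 : (∑ v ∈ Om M, if 1 ≤ v.2.1 ∧ v.2.2 ≤ -1 ∧ 2 ≤ v.2.2 - v.2.1 + v.1 then
      th v.1 * sg v.2.1 else 0) = 0 := by
    have h := Om_swap M (fun y e f => if 1 ≤ e ∧ f ≤ -1 ∧ 2 ≤ f - e + y then th y * sg e else 0)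
    rw [Om_negE M (fun y f e => if 1 ≤ e ∧ f ≤ -1 ∧ 2 ≤ f - e + y then th y * sg e else 0)] at h
    have h2 : (∑ v ∈ Om M, if 1 ≤ -v.2.2 ∧ -v.2.1 ≤ -1 ∧ 2 ≤ -v.2.1 - -v.2.2 + v.1 then
        th v.1 * sg (-v.2.2) else 0) =
        -∑ v ∈ Om M, if 1 ≤ v.2.1 ∧ v.2.2 ≤ -1 ∧ 2 ≤ v.2.2 - v.2.1 + v.1 then
          th v.1 * sg v.2.1 else 0 := by
      rw [← Finset.sum_neg_distrib]
      refine Finset.sum_congr rfl ?_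
      rintro ⟨y, e, f⟩ hv
      rw [mem_Om] at hv
      dsimp only
      rw [sg_neg, sg_opp hv.2.2.1]
      split_ifs <;> first | omega | ring
    linarith
  have key : (∑ v ∈ Om M, if 1 ≤ v.2.1 ∧ 2 ≤ v.2.2 - v.2.1 + v.1 then th v.1 * sg v.2.1 else 0) =
      (∑ v ∈ Om M, if 1 ≤ v.2.1 ∧ 1 ≤ v.2.2 ∧ |v.2.1 - v.2.2| < v.1 then
        th v.1 * sg v.2.1 else 0) +
      (∑ v ∈ Om M, if 1 ≤ v.2.1 ∧ v.2.1 + |v.1| ≤ v.2.2 then th v.1 * sg v.2.1 else 0) -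
      (∑ v ∈ Om M, if v.1 < 0 ∧ 1 ≤ v.2.1 ∧ v.2.2 = v.2.1 + |v.1| then
        th v.1 * sg v.2.1 else 0) +
      (∑ v ∈ Om M, if 1 ≤ v.2.1 ∧ v.2.2 ≤ -1 ∧ 2 ≤ v.2.2 - v.2.1 + v.1 then
        th v.1 * sg v.2.1 else 0) +
      ∑ v ∈ Om M, if v.2.2 = 0 ∧ 1 ≤ v.2.1 ∧ v.2.1 + 2 ≤ v.1 then th v.1 * sg v.2.1 else 0 := by
    rw [← Finset.sum_add_distrib, ← Finset.sum_sub_distrib, ← Finset.sum_add_distrib,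
      ← Finset.sum_add_distrib]
    refine Finset.sum_congr rfl ?_
    rintro ⟨y, e, f⟩ hv
    rw [mem_Om] at hv
    obtain ⟨-, h1, h2, -⟩ := hv
    dsimp only
    generalize th y * sg e = T
    rcases abs_cases y with h | h <;> rw [h.1] <;>
      rcases abs_cases (e - f) with h' | h' <;> rw [h'.1] <;> split_ifs <;> first | omega
  rw [key, a1, a2, a3, a4]; ring

lemma sum_chi8 (k : ℕ) : 2 * ∑ j ∈ Finset.range k, chi8 ((2 * j + 1 : ℕ) : ZMod 8) =
    chi8 ((2 * k + 1 : ℕ) : ZMod 8) * (chi4 ((2 * k + 1 : ℕ) : ZMod 4) - 1) := by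
  induction k with
  | zero => decide
  | succ k ih =>
    rw [Finset.sum_range_succ, mul_add, ih]
    have h (x : ℕ) : (x : ZMod 4) = ZMod.castHom (show 4 ∣ 8 by norm_num) (ZMod 4) (x : ZMod 8) :=
      (map_natCast _ _).symm
    rw [h, h]
    push_cast
    generalize (k : ZMod 8) = k
    revert k
    decide

/-! ### A signed count of representations by `Z² + 8(e² + f²)` -/

lemma sg_mul_self (e : ℤ) : sg e * sg e = 1 := by unfold sg; split_ifs <;> rfl

/-- On the boundary `f = e + y` the equation reads `(y + 2e)² = M`. -/
lemma Om_first (k : ℕ) :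
    (∑ v ∈ Om ((2 * k + 1 : ℤ) ^ 2), if 0 < v.1 ∧ 1 ≤ v.2.1 ∧ v.2.2 = v.2.1 + v.1 then
      th v.1 * sg v.2.1 else 0) =
    chi4 ((2 * k + 1 : ℤ) : ZMod 4) * ∑ j ∈ Finset.range k, chi8 ((2 * j + 1 : ℕ) : ZMod 8) := by
  rw [← Finset.sum_filter, Finset.mul_sum]
  symm
  refine Finset.sum_nbij' (fun j => ((2 * j + 1 : ℤ), (k - j : ℤ), (k + j + 1 : ℤ)))
    (fun v => ((v.1 - 1) / 2).toNat) ?_ ?_ ?_ ?_ ?_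
  · intro j hj
    rw [Finset.mem_range] at hj
    rw [Finset.mem_filter, mem_Om]
    have : (2 * k + 1 : ℤ) ≤ (2 * k + 1) ^ 2 := by nlinarith
    refine ⟨⟨⟨⟨?_, ?_⟩, ⟨?_, ?_⟩, ?_, ?_⟩, ?_, ?_, by ring⟩, ?_, ?_, ?_⟩ <;>
      first | omega | rfl | (dsimp only; omega)
  · rintro ⟨y, e, f⟩ h
    rw [Finset.mem_filter, mem_Om] at h
    obtain ⟨⟨-, h0, h1, h2⟩, h3, h4, h5⟩ := h
    dsimp only at h3 h4 h5 ⊢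
    have h6 : (y + 2 * e) ^ 2 = (2 * k + 1 : ℤ) ^ 2 := by rw [← h2, h5]; ring
    rw [sq_eq_sq₀ (by omega) (by omega)] at h6
    rw [Finset.mem_range]
    omega
  · intro j hj
    dsimp only
    omega
  · rintro ⟨y, e, f⟩ h
    rw [Finset.mem_filter, mem_Om] at h
    obtain ⟨⟨-, h0, h1, h2⟩, h3, h4, h5⟩ := h
    dsimp only at h3 h4 h5 ⊢
    have h6 : (y + 2 * e) ^ 2 = (2 * k + 1 : ℤ) ^ 2 := by rw [← h2, h5]; ring
    rw [sq_eq_sq₀ (by omega) (by omega)] at h6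
    refine Prod.ext ?_ (Prod.ext ?_ ?_) <;> dsimp only <;> omega
  · intro j hj
    dsimp only
    have := chi4_sub_two (2 * k + 1) (k - j)
    rw [show (2 * k + 1 - 2 * (k - j) : ℤ) = 2 * j + 1 by ring] at this
    rw [th, this]
    push_cast
    linear_combination -(chi4 (2 * k + 1) * chi8 (2 * j + 1)) * sg_mul_self (k - j)

/-- On the boundary `f = 0` the equation reads `y² = M`. -/
lemma Om_second (k : ℕ) :
    (∑ v ∈ Om ((2 * k + 1 : ℤ) ^ 2), if v.2.2 = 0 ∧ 1 ≤ v.2.1 ∧ v.2.1 + 2 ≤ v.1 then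
      th v.1 * sg v.2.1 else 0) = -(th (2 * k + 1) * k) := by
  rw [← Finset.sum_filter]
  have : -(th (2 * k + 1) * (k : ℤ)) = ∑ j ∈ Finset.range k, -th (2 * k + 1) := by
    rw [Finset.sum_const, Finset.card_range]; simp; ring
  rw [this]
  symm
  refine Finset.sum_nbij' (fun j => ((2 * k + 1 : ℤ), (2 * j + 1 : ℤ), (0 : ℤ)))
    (fun v => ((v.2.1 - 1) / 2).toNat) ?_ ?_ ?_ ?_ ?_
  · intro j hj
    rw [Finset.mem_range] at hj
    rw [Finset.mem_filter, mem_Om]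
    have : (2 * k + 1 : ℤ) ≤ (2 * k + 1) ^ 2 := by nlinarith
    refine ⟨⟨⟨⟨?_, ?_⟩, ⟨?_, ?_⟩, ?_, ?_⟩, ?_, ?_, by ring⟩, ?_, ?_, ?_⟩ <;>
      first | omega | rfl | (dsimp only; omega)
  · rintro ⟨y, e, f⟩ h
    rw [Finset.mem_filter, mem_Om] at h
    obtain ⟨⟨-, h0, h1, h2⟩, h3, h4, h5⟩ := h
    dsimp only at h3 h4 h5 ⊢
    rw [h3, mul_zero, add_zero, sq_eq_sq₀ (by omega) (by omega)] at h2
    rw [Finset.mem_range]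
    omega
  · intro j hj
    dsimp only
    omega
  · rintro ⟨y, e, f⟩ h
    rw [Finset.mem_filter, mem_Om] at h
    obtain ⟨⟨-, h0, h1, h2⟩, h3, h4, h5⟩ := h
    dsimp only at h3 h4 h5 ⊢
    rw [h3, mul_zero, add_zero, sq_eq_sq₀ (by omega) (by omega)] at h2
    refine Prod.ext ?_ (Prod.ext ?_ ?_) <;> dsimp only <;> omega
  · intro j hj
    dsimp only
    rw [sg, if_neg (by omega)]; ring

/-- The boundary terms require `M` to be a square. -/
lemma Om_nonsq (M : ℤ) (hM : ∀ s : ℤ, s ^ 2 ≠ M) :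
    (∑ v ∈ Om M, if 0 < v.1 ∧ 1 ≤ v.2.1 ∧ v.2.2 = v.2.1 + v.1 then th v.1 * sg v.2.1 else 0) +
      (∑ v ∈ Om M, if v.2.2 = 0 ∧ 1 ≤ v.2.1 ∧ v.2.1 + 2 ≤ v.1 then th v.1 * sg v.2.1 else 0)
      = 0 := by
  rw [Finset.sum_eq_zero, Finset.sum_eq_zero, add_zero]
  · rintro ⟨y, e, f⟩ h
    rw [mem_Om] at h
    refine if_neg ?_
    rintro ⟨h1, -⟩
    dsimp only at h1
    exact hM y (by rw [← h.2.2.2, h1]; ring)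
  · rintro ⟨y, e, f⟩ h
    rw [mem_Om] at h
    refine if_neg ?_
    rintro ⟨-, -, h1⟩
    dsimp only at h1
    exact hM (y + 2 * e) (by rw [← h.2.2.2, h1]; ring)

lemma r1_zero : r 1 0 = 1 := by
  rw [r, show rep 1 0 = {(0, 0)} from ?_]
  · rfl
  · ext ⟨x, y⟩
    rw [mem_rep one_pos, Finset.mem_singleton, Prod.mk.injEq]
    constructor
    · intro h
      push_cast at h
      have h1 : x ^ 2 = 0 := by nlinarith [sq_nonneg x, sq_nonneg y]
      have h2 : y ^ 2 = 0 := by nlinarith [sq_nonneg x, sq_nonneg y]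
      exact ⟨pow_eq_zero_iff two_ne_zero |>.1 h1, pow_eq_zero_iff two_ne_zero |>.1 h2⟩
    · rintro ⟨rfl, rfl⟩; rfl

lemma r1_all (k : ℕ) :
    r 1 k = (if k = 0 then 1 else 0) + 4 * ∑ u ∈ k.divisorsAntidiagonal, chi4 (u.1 : ZMod 4) := by
  rcases eq_or_ne k 0 with rfl | h
  · simp [r1_zero]
  · rw [if_neg h, zero_add, r1_eq k h, g4, Nat.sum_divisorsAntidiagonal (fun d _ => chi4 (d : ZMod 4))]

/-- The odd integers `Z` in `[-B, B]` with `Z² ≤ M`. -/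
noncomputable def oddBox (M B : ℤ) : Finset ℤ :=
  (Finset.Icc (-B) B).filter fun Z => Z % 2 = 1 ∧ Z ^ 2 ≤ M

lemma odd_sq_div {Z M : ℤ} (hZ : Z % 2 = 1) (hM : M % 8 = 1) :
    8 * ((M - Z ^ 2) / 8) = M - Z ^ 2 := by
  have := Int.sq_mod_four_eq_one_of_odd (Int.odd_iff.2 hZ)
  have h8 : Z ^ 2 % 8 = 1 := by
    obtain ⟨q, i, hi, rfl⟩ : ∃ q i : ℤ, (0 ≤ i ∧ i < 8) ∧ Z = 8 * q + i :=
      ⟨Z / 8, Z % 8, by omega, by omega⟩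
    obtain ⟨h0, h8⟩ := hi
    interval_cases i <;> ring_nf <;> omega
  omega

/-- The terms with `k = (M - Z²)/8 > 0` give `4 ∑ (-1)^k chi4(d)` over `Z² + 8de = M`, evaluated by the
involutions above; those with `k = 0` count the roots of `Z² = M`. -/
theorem L3 (M B : ℤ) (hM : M % 8 = 1) (hB : M ≤ B) :
    ∑ Z ∈ oddBox M B, sg ((M - Z ^ 2) / 8) * r 1 ((M - Z ^ 2) / 8).toNat =
      ∑ Z ∈ (Finset.Icc (-B) B).filter (fun Z => Z ^ 2 = M), chi4 (Z : ZMod 4) * Z := by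
  rcases lt_or_ge M 0 with hneg | hpos
  · rw [oddBox, Finset.filter_false_of_mem, Finset.filter_false_of_mem] <;> simp
    · intro Z _ _; nlinarith [sq_nonneg Z]
    · intro Z _ _ _; nlinarith [sq_nonneg Z]
  obtain ⟨m, rfl⟩ : ∃ m, M = 8 * m + 1 := ⟨M / 8, by omega⟩
  set M := 8 * m + 1 with hMdef
  have hdiag : ∑ Z ∈ oddBox M B, (if ((M - Z ^ 2) / 8).toNat = 0 then (1 : ℤ) else 0) =
      ∑ Z ∈ (Finset.Icc (-B) B).filter (fun Z => Z ^ 2 = M), 1 := by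
    rw [← Finset.sum_filter, oddBox, Finset.filter_filter]
    refine Finset.sum_congr (Finset.filter_congr fun Z _ => ?_) fun _ _ => rfl
    constructor
    · rintro ⟨⟨h1, h2⟩, h3⟩
      have := odd_sq_div h1 hM
      omega
    · intro h
      have h1 : Z % 2 = 1 := by
        rcases Int.even_or_odd' Z with ⟨z, hz | hz⟩
        · rw [hz] at h; ring_nf at h; omega
        · omega
      have := odd_sq_div h1 hM
      omega
  have hdiv : ∑ Z ∈ oddBox M B, ∑ u ∈ ((M - Z ^ 2) / 8).toNat.divisorsAntidiagonal,
        sg ((M - Z ^ 2) / 8) * chi4 (u.1 : ZMod 4) =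
      sg m * ∑ v ∈ Sg M, chi4 (v.2.1 : ZMod 4) * chi8 (v.1 : ZMod 8) := by
    rw [Finset.mul_sum, Finset.sum_sigma']
    refine Finset.sum_nbij' (fun v => (v.1, (v.2.1 : ℤ), (v.2.2 : ℤ)))
      (fun v => ⟨v.1, v.2.1.toNat, v.2.2.toNat⟩) ?_ ?_ ?_ ?_ ?_
    · rintro ⟨Z, e, f⟩ h
      simp only [Finset.mem_sigma, oddBox, Finset.mem_filter, Nat.mem_divisorsAntidiagonal] at h
      obtain ⟨⟨h1, h2, h3⟩, h4, h5⟩ := h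
      dsimp only
      rw [mem_Sg]
      have h6 := odd_sq_div h2 hM
      have he : e ≠ 0 := by rintro rfl; simp at h4; omega
      have hf : f ≠ 0 := by rintro rfl; simp at h4; omega
      have h7 : ((e * f : ℕ) : ℤ) = (M - Z ^ 2) / 8 := by omega
      push_cast at h7
      exact ⟨h2, by omega, by omega, by linear_combination 8 * h7 + h6⟩
    · rintro ⟨Z, e, f⟩ h
      have hb := h
      simp only [Sg, Finset.mem_filter, Finset.mem_product, Finset.mem_Icc] at hb
      rw [mem_Sg] at h
      obtain ⟨h2, h3, h4, h5⟩ := h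
      simp only [Finset.mem_sigma, oddBox, Finset.mem_filter, Finset.mem_Icc,
        Nat.mem_divisorsAntidiagonal]
      lift e to ℕ using by omega
      lift f to ℕ using by omega
      have h6 := odd_sq_div h2 hM
      have hef : (0 : ℤ) < e * f := by apply mul_pos <;> omega
      have h7 : ((e * f : ℕ) : ℤ) = (M - Z ^ 2) / 8 := by push_cast; linarith
      have h8 : 0 < e * f := by exact_mod_cast hef
      refine ⟨⟨⟨by omega, by omega⟩, h2, by nlinarith⟩, ?_, ?_⟩
      · simp only [← h7, Int.toNat_natCast]
      · rw [← h7]; simp only [Int.toNat_natCast]; omega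
    · rintro ⟨Z, e, f⟩ h; simp
    · rintro ⟨Z, e, f⟩ h
      rw [mem_Sg] at h
      refine Prod.ext rfl (Prod.ext ?_ ?_) <;> dsimp only <;> omega
    · rintro ⟨Z, e, f⟩ h
      simp only [Finset.mem_sigma, oddBox, Finset.mem_filter] at h
      have h6 := odd_sq_div h.1.2.1 hM
      dsimp only
      rw [chi8_sq (t := m - (M - Z ^ 2) / 8) (by linarith), sg_sub]
      push_cast
      linear_combination -(sg ((M - Z ^ 2) / 8) * chi4 e) * sg_mul_self m
  have hsplit : ∑ Z ∈ oddBox M B, sg ((M - Z ^ 2) / 8) * r 1 ((M - Z ^ 2) / 8).toNat =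
      (∑ Z ∈ (Finset.Icc (-B) B).filter (fun Z => Z ^ 2 = M), (1 : ℤ)) +
      4 * (sg m * ∑ v ∈ Sg M, chi4 (v.2.1 : ZMod 4) * chi8 (v.1 : ZMod 8)) := by
    rw [← hdiag, ← hdiv, Finset.mul_sum, ← Finset.sum_add_distrib]
    refine Finset.sum_congr rfl fun Z hZ => ?_
    simp only [oddBox, Finset.mem_filter] at hZ
    have h6 := odd_sq_div hZ.2.1 hM
    rw [r1_all, ← Finset.mul_sum]
    split_ifs with h
    · have : (M - Z ^ 2) / 8 = 0 := by omega
      rw [this]; simp [sg]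
    · ring
  rw [hsplit, Sg_step1, Sg_step2, Om_step3]
  by_cases hsq : ∃ s : ℤ, s ^ 2 = M
  · obtain ⟨s, hs⟩ := hsq
    obtain ⟨k, hk⟩ : ∃ k : ℕ, (2 * k + 1 : ℤ) ^ 2 = M := by
      have h1 : s % 2 = 1 := by
        rcases Int.even_or_odd' s with ⟨z, hz | hz⟩
        · rw [hz] at hs; ring_nf at hs; omega
        · omega
      refine ⟨s.natAbs / 2, ?_⟩
      rw [← hs, ← sq_abs s, Int.abs_eq_natAbs]
      congr 1
      omega
    have hset : (Finset.Icc (-B) B).filter (fun Z => Z ^ 2 = M) =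
        {(2 * k + 1 : ℤ), -(2 * k + 1 : ℤ)} := by
      ext Z
      rw [Finset.mem_filter, Finset.mem_insert, Finset.mem_singleton, ← hk, sq_eq_sq_iff_eq_or_eq_neg,
        Finset.mem_Icc]
      have : (2 * k + 1 : ℤ) ≤ (2 * k + 1) ^ 2 := by nlinarith
      omega
    rw [hset, Finset.sum_pair (by omega), Finset.sum_pair (by omega), ← hk, Om_first, Om_second]
    have h1 := sum_chi8 k
    have h2 : chi8 ((2 * k + 1 : ℤ) : ZMod 8) = sg m := chi8_sq (hk.trans hMdef)
    have h3 : chi4 ((2 * k + 1 : ℤ) : ZMod 4) ^ 2 = 1 := by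
      have := od4 (n := 2 * k + 1) ⟨k, rfl⟩
      push_cast at this ⊢
      rcases this with h | h <;> rw [h] <;> rfl
    have h4 := sg_mul_self m
    rw [th, Int.cast_neg, chi4_neg]
    push_cast at h1 h2 h3 ⊢
    rw [h2] at h1 ⊢
    generalize chi4 (2 * k + 1) = c at *
    generalize sg m = w at *
    generalize ∑ j ∈ Finset.range k, chi8 (2 * (j : ZMod 8) + 1) = S at *
    linear_combination (-2 * w * c) * h1 + (-2 * c * (c - 1) + 4 * c * k) * h4 - 2 * h3
  · push Not at hsq
    rw [Om_nonsq M hsq, Finset.filter_false_of_mem (fun Z _ => hsq Z)]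
    simp

/-! ### The quaternary form `X² + 3(Y² + Z² + W²)` -/

/-- The solutions `(X, Y, Z, W) ∈ ℤ⁴` of `X² + 3Y² + 3Z² + 3W² = N`. -/
noncomputable def Q (N : ℕ) : Finset (ℤ × ℤ × ℤ × ℤ) :=
  (Finset.Icc (-(N : ℤ)) N ×ˢ Finset.Icc (-(N : ℤ)) N ×ˢ Finset.Icc (-(N : ℤ)) N ×ˢ
    Finset.Icc (-(N : ℤ)) N).filter fun v =>
      v.1 ^ 2 + 3 * v.2.1 ^ 2 + 3 * v.2.2.1 ^ 2 + 3 * v.2.2.2 ^ 2 = N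

lemma mem_Q {N : ℕ} {X Y Z W : ℤ} :
    (X, Y, Z, W) ∈ Q N ↔ X ^ 2 + 3 * Y ^ 2 + 3 * Z ^ 2 + 3 * W ^ 2 = N := by
  simp only [Q, Finset.mem_filter, Finset.mem_product, Finset.mem_Icc, and_iff_right_iff_imp]
  intro h
  have key (t : ℤ) (ht : t ^ 2 ≤ N) : -(N : ℤ) ≤ t ∧ t ≤ N :=
    ⟨by nlinarith [Int.le_self_sq (-t)], by nlinarith [Int.le_self_sq t]⟩
  have hX := sq_nonneg X
  have hY := sq_nonneg Y
  have hZ := sq_nonneg Z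
  have hW := sq_nonneg W
  exact ⟨key X (by linarith), key Y (by linarith), key Z (by linarith), key W (by linarith)⟩

lemma Q_swapYZ (N : ℕ) (f : ℤ → ℤ → ℤ → ℤ → ℤ) :
    ∑ v ∈ Q N, f v.1 v.2.1 v.2.2.1 v.2.2.2 = ∑ v ∈ Q N, f v.1 v.2.2.1 v.2.1 v.2.2.2 := by
  refine Finset.sum_nbij' (fun v => (v.1, v.2.2.1, v.2.1, v.2.2.2))
    (fun v => (v.1, v.2.2.1, v.2.1, v.2.2.2)) ?_ ?_ ?_ ?_ ?_
  · rintro ⟨X, Y, Z, W⟩ h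
    rw [mem_Q] at *; linarith
  · rintro ⟨X, Y, Z, W⟩ h
    rw [mem_Q] at *; linarith
  all_goals simp

lemma Q_swapZW (N : ℕ) (f : ℤ → ℤ → ℤ → ℤ → ℤ) :
    ∑ v ∈ Q N, f v.1 v.2.1 v.2.2.1 v.2.2.2 = ∑ v ∈ Q N, f v.1 v.2.1 v.2.2.2 v.2.2.1 := by
  refine Finset.sum_nbij' (fun v => (v.1, v.2.1, v.2.2.2, v.2.2.1))
    (fun v => (v.1, v.2.1, v.2.2.2, v.2.2.1)) ?_ ?_ ?_ ?_ ?_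
  · rintro ⟨X, Y, Z, W⟩ h
    rw [mem_Q] at *; linarith
  · rintro ⟨X, Y, Z, W⟩ h
    rw [mem_Q] at *; linarith
  all_goals simp

lemma Q_swapYW (N : ℕ) (f : ℤ → ℤ → ℤ → ℤ → ℤ) :
    ∑ v ∈ Q N, f v.1 v.2.1 v.2.2.1 v.2.2.2 = ∑ v ∈ Q N, f v.1 v.2.2.2 v.2.2.1 v.2.1 := by
  refine Finset.sum_nbij' (fun v => (v.1, v.2.2.2, v.2.2.1, v.2.1))
    (fun v => (v.1, v.2.2.2, v.2.2.1, v.2.1)) ?_ ?_ ?_ ?_ ?_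
  · rintro ⟨X, Y, Z, W⟩ h
    rw [mem_Q] at *; linarith
  · rintro ⟨X, Y, Z, W⟩ h
    rw [mem_Q] at *; linarith
  all_goals simp

/-- The form is the sum of `X² + 3Y²` and `3(Z² + W²)`, so sums over its points are convolutions. -/
lemma Q_conv (N : ℕ) (F G : ℤ → ℤ → ℤ) :
    ∑ v ∈ Q N, F v.1 v.2.1 * G v.2.2.1 v.2.2.2 =
      ∑ p ∈ Finset.HasAntidiagonal.antidiagonal N, (∑ v ∈ rep 3 p.1, F v.1 v.2) *
        gext (fun k => ∑ v ∈ rep 1 k, G v.1 v.2) 3 p.2 := by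
  have h1 (p : ℕ × ℕ) : (∑ v ∈ rep 3 p.1, F v.1 v.2) *
        gext (fun k => ∑ v ∈ rep 1 k, G v.1 v.2) 3 p.2 =
        if 3 ∣ p.2 then ∑ w ∈ rep 3 p.1 ×ˢ rep 1 (p.2 / 3), F w.1.1 w.1.2 * G w.2.1 w.2.2 else 0 := by
    rw [gext]
    split_ifs
    · rw [Finset.sum_mul_sum, Finset.sum_product]
    · rw [mul_zero]
  simp only [h1]
  rw [← Finset.sum_filter, Finset.sum_sigma']
  refine Finset.sum_nbij' (fun v => ⟨((v.1 ^ 2 + 3 * v.2.1 ^ 2).toNat,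
      (3 * v.2.2.1 ^ 2 + 3 * v.2.2.2 ^ 2).toNat), ((v.1, v.2.1), (v.2.2.1, v.2.2.2))⟩)
    (fun w => (w.2.1.1, w.2.1.2, w.2.2.1, w.2.2.2)) ?_ ?_ ?_ ?_ ?_
  · rintro ⟨X, Y, Z, W⟩ h
    rw [mem_Q] at h
    simp only [Finset.mem_sigma, Finset.mem_filter, Finset.HasAntidiagonal.mem_antidiagonal,
      Finset.mem_product, mem_rep three_pos, mem_rep one_pos]
    have hX := sq_nonneg X
    have hY := sq_nonneg Y
    have hZ := sq_nonneg Z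
    have hW := sq_nonneg W
    refine ⟨⟨?_, ?_⟩, ?_, ?_⟩ <;> omega
  · rintro ⟨⟨a, b⟩, ⟨X, Y⟩, Z, W⟩ h
    simp only [Finset.mem_sigma, Finset.mem_filter, Finset.HasAntidiagonal.mem_antidiagonal,
      Finset.mem_product, mem_rep three_pos, mem_rep one_pos] at h
    dsimp only
    rw [mem_Q]
    obtain ⟨⟨h1, h2⟩, h3, h4⟩ := h
    omega
  · rintro ⟨X, Y, Z, W⟩ h; rfl
  · rintro ⟨⟨a, b⟩, ⟨X, Y⟩, Z, W⟩ h
    simp only [Finset.mem_sigma, Finset.mem_filter, Finset.HasAntidiagonal.mem_antidiagonal,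
      Finset.mem_product, mem_rep three_pos, mem_rep one_pos] at h
    obtain ⟨⟨h1, h2⟩, h3, h4⟩ := h
    have e1 : (X ^ 2 + 3 * Y ^ 2).toNat = a := by omega
    have e2 : (3 * Z ^ 2 + 3 * W ^ 2).toNat = b := by omega
    simp only [e1, e2]
  · rintro ⟨X, Y, Z, W⟩ h; rfl

lemma r3_zero : r 3 0 = 1 := by
  rw [r, show rep 3 0 = {(0, 0)} from ?_]
  · rfl
  · ext ⟨x, y⟩
    rw [mem_rep three_pos, Finset.mem_singleton, Prod.mk.injEq]
    constructor
    · intro h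
      push_cast at h
      have h1 : x ^ 2 = 0 := by nlinarith [sq_nonneg x, sq_nonneg y]
      have h2 : y ^ 2 = 0 := by nlinarith [sq_nonneg x, sq_nonneg y]
      exact ⟨pow_eq_zero_iff two_ne_zero |>.1 h1, pow_eq_zero_iff two_ne_zero |>.1 h2⟩
    · rintro ⟨rfl, rfl⟩; rfl

lemma g3_zero : g3 0 = 0 := by simp [g3]
lemma g4_zero : g4 0 = 0 := by simp [g4]

lemma r3_full (a : ℕ) : r 3 a = (if a = 0 then 1 else 0) + 2 * g3 a + 4 * gext g3 4 a := by
  rcases eq_or_ne a 0 with rfl | h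
  · simp [r3_zero, gext, g3_zero]
  · rw [r3_all a h, if_neg h]; ring

lemma r1_full (b : ℕ) : gext (r 1) 3 b = (if b = 0 then 1 else 0) + 4 * gext g4 3 b := by
  rcases eq_or_ne b 0 with rfl | h
  · simp [r1_zero, gext, g4_zero]
  · rw [if_neg h, gext, gext]
    split_ifs with h3
    · rw [r1_eq _ (by omega)]; ring
    · ring

/-- Modulo `2`, `X ≡ Y` exactly when `4 ∣ X² + 3Y²`, so the parity-restricted count is supported on
multiples of `4`. -/
lemma r3_par (a : ℕ) : (∑ v ∈ rep 3 a, if v.1 % 2 = v.2 % 2 then (1 : ℤ) else 0) =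
    (if a = 0 then 1 else 0) + 6 * gext g3 4 a := by
  have h1 : (∑ v ∈ rep 3 a, if v.1 % 2 = v.2 % 2 then (1 : ℤ) else 0) =
      if 4 ∣ a then r 3 a else 0 := by
    split_ifs with h4
    · rw [r_eq_sum]
      refine Finset.sum_congr rfl ?_
      rintro ⟨x, y⟩ h
      rw [mem_rep three_pos] at h
      obtain ⟨m, rfl⟩ := h4
      push_cast at h
      exact if_pos (par3 h)
    · refine Finset.sum_eq_zero ?_
      rintro ⟨x, y⟩ h
      rw [mem_rep three_pos] at h
      refine if_neg fun hxy => h4 ?_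
      dsimp only at hxy
      rcases Int.even_or_odd' x with ⟨x', h1 | h1⟩ <;> rcases Int.even_or_odd' y with ⟨y', h2 | h2⟩ <;>
        first | omega | (rw [h1, h2] at h; ring_nf at h; omega)
  rw [h1]
  rcases eq_or_ne a 0 with rfl | h
  · simp [r3_zero, gext, g3_zero]
  · rw [if_neg h, gext]
    split_ifs with h3
    · obtain ⟨m, rfl⟩ := h3
      rw [r_four m (by omega), Nat.mul_div_cancel_left _ (by norm_num)]; ring
    · ring

lemma sum_anti_left (N : ℕ) (f : ℕ → ℤ) :
    ∑ p ∈ Finset.HasAntidiagonal.antidiagonal N, (if p.1 = 0 then (1 : ℤ) else 0) * f p.2 = f N := by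
  rw [Finset.sum_eq_single (0, N)]
  · simp
  · rintro ⟨a, b⟩ h hne
    rw [Finset.HasAntidiagonal.mem_antidiagonal] at h
    rw [if_neg, zero_mul]
    rintro h0
    apply hne
    dsimp only at h h0
    ext <;> dsimp only <;> omega
  · intro h; simp at h

lemma sum_anti_right (N : ℕ) (f : ℕ → ℤ) :
    ∑ p ∈ Finset.HasAntidiagonal.antidiagonal N, f p.1 * (if p.2 = 0 then (1 : ℤ) else 0) = f N := by
  rw [Finset.sum_eq_single (N, 0)]
  · simp
  · rintro ⟨a, b⟩ h hne
    rw [Finset.HasAntidiagonal.mem_antidiagonal] at h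
    rw [if_neg, mul_zero]
    rintro h0
    apply hne
    dsimp only at h h0
    ext <;> dsimp only <;> omega
  · intro h; simp at h

lemma sq_mod8 (x : ℤ) : x ^ 2 % 8 = if x % 2 = 1 then 1 else if x % 4 = 2 then 4 else 0 := by
  obtain ⟨q, i, hi, rfl⟩ : ∃ q i : ℤ, (0 ≤ i ∧ i < 8) ∧ x = 8 * q + i :=
    ⟨x / 8, x % 8, by omega, by omega⟩
  obtain ⟨h0, h8⟩ := hi
  split_ifs <;> interval_cases i <;> first | omega | (ring_nf; omega)

/-- The number of points of `Q N` with `X ≡ Y (mod 2)`. -/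
noncomputable def hh (N : ℕ) : ℤ :=
  ∑ v ∈ Q N, if v.1 % 2 = v.2.1 % 2 then (1 : ℤ) else 0

/-- Both `hh N` and the number of points of `Q N` are convolutions of `g3` and `g4`. The two are
proportional, since each point satisfies exactly two of `X ≡ Y`, `X ≡ Z`, `X ≡ W` modulo `2`. This and
`liouville` form a linear system for `hh N`. -/
theorem hh_eq (N : ℕ) (hN : N % 8 = 3) : hh N = 2 * (E1 N - E2 N) := by
  have hN0 : N ≠ 0 := by omega
  have hR : ((Q N).card : ℤ) = 4 * gext g4 3 N + 2 * g3 N +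
      8 * ∑ p ∈ Finset.HasAntidiagonal.antidiagonal N, g3 p.1 * gext g4 3 p.2 +
      16 * ∑ p ∈ Finset.HasAntidiagonal.antidiagonal N, gext g3 4 p.1 * gext g4 3 p.2 := by
    have h := Q_conv N (fun _ _ => 1) (fun _ _ => 1)
    simp only [← r_eq_sum] at h
    rw [show (fun k => r 1 k) = r 1 from rfl] at h
    rw [show ((Q N).card : ℤ) = ∑ v ∈ Q N, 1 * 1 by simp, h]
    have : ∀ p : ℕ × ℕ, r 3 p.1 * gext (r 1) 3 p.2 =
        (if p.1 = 0 then (1 : ℤ) else 0) * gext (r 1) 3 p.2 +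
        (2 * g3 p.1 + 4 * gext g3 4 p.1) * (if p.2 = 0 then (1 : ℤ) else 0) +
        (8 * (g3 p.1 * gext g4 3 p.2) + 16 * (gext g3 4 p.1 * gext g4 3 p.2)) := by
      intro p
      rw [r3_full, r1_full]; ring
    simp only [this, Finset.sum_add_distrib]
    rw [sum_anti_left N (fun b => gext (r 1) 3 b),
      sum_anti_right N (fun a => 2 * g3 a + 4 * gext g3 4 a), r1_full, if_neg hN0,
      ← Finset.mul_sum, ← Finset.mul_sum, gext, gext, if_neg (show ¬ 4 ∣ N by omega)]
    ring
  have hH : hh N = 4 * gext g4 3 N +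
      24 * ∑ p ∈ Finset.HasAntidiagonal.antidiagonal N, gext g3 4 p.1 * gext g4 3 p.2 := by
    have h := Q_conv N (fun x y => if x % 2 = y % 2 then (1 : ℤ) else 0) (fun _ _ => 1)
    simp only [← r_eq_sum, r3_par, mul_one] at h
    rw [show (fun k => r 1 k) = r 1 from rfl] at h
    rw [hh, h]
    have : ∀ p : ℕ × ℕ, ((if p.1 = 0 then (1 : ℤ) else 0) + 6 * gext g3 4 p.1) * gext (r 1) 3 p.2 =
        (if p.1 = 0 then (1 : ℤ) else 0) * gext (r 1) 3 p.2 +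
        (6 * gext g3 4 p.1) * (if p.2 = 0 then (1 : ℤ) else 0) +
        24 * (gext g3 4 p.1 * gext g4 3 p.2) := by
      intro p
      rw [r1_full]; ring
    simp only [this, Finset.sum_add_distrib]
    rw [sum_anti_left N (fun b => gext (r 1) 3 b),
      sum_anti_right N (fun a => 6 * gext g3 4 a), r1_full, if_neg hN0,
      ← Finset.mul_sum, gext, gext, if_neg (show ¬ 4 ∣ N by omega)]
    ring
  have h3 : 3 * hh N = 2 * (Q N).card := by
    have hZ := Q_swapYZ N (fun x y _ _ => if x % 2 = y % 2 then (1 : ℤ) else 0)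
    have hW := Q_swapYW N (fun x y _ _ => if x % 2 = y % 2 then (1 : ℤ) else 0)
    have : hh N + hh N + hh N = ∑ v ∈ Q N, 2 := by
      have e : hh N + hh N + hh N = (∑ v ∈ Q N, if v.1 % 2 = v.2.1 % 2 then (1 : ℤ) else 0) +
          (∑ v ∈ Q N, if v.1 % 2 = v.2.2.1 % 2 then (1 : ℤ) else 0) +
          ∑ v ∈ Q N, if v.1 % 2 = v.2.2.2 % 2 then (1 : ℤ) else 0 := by
        rw [← hZ, ← hW]; rfl
      rw [e, ← Finset.sum_add_distrib, ← Finset.sum_add_distrib]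
      refine Finset.sum_congr rfl ?_
      rintro ⟨X, Y, Z, W⟩ h
      rw [mem_Q] at h
      have e1 := sq_mod8 X
      have e2 := sq_mod8 Y
      have e3 := sq_mod8 Z
      have e4 := sq_mod8 W
      dsimp only
      rcases Int.emod_two_eq_zero_or_one X with p1 | p1 <;>
      rcases Int.emod_two_eq_zero_or_one Y with p2 | p2 <;>
      rcases Int.emod_two_eq_zero_or_one Z with p3 | p3 <;>
      rcases Int.emod_two_eq_zero_or_one W with p4 | p4 <;>
      rw [p1] at e1 <;> rw [p2] at e2 <;> rw [p3] at e3 <;> rw [p4] at e4 <;>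
      rw [p1, p2, p3, p4] <;> norm_num at e1 e2 e3 e4 ⊢ <;> omega
    rw [Finset.sum_const] at this
    simp at this
    linarith
  have hL := liouville N (by omega)
  have hsplit : ∑ p ∈ Finset.HasAntidiagonal.antidiagonal N,
      (g3 p.1 - 3 * gext g3 4 p.1) * gext g4 3 p.2 =
      ∑ p ∈ Finset.HasAntidiagonal.antidiagonal N, g3 p.1 * gext g4 3 p.2 -
      3 * ∑ p ∈ Finset.HasAntidiagonal.antidiagonal N, gext g3 4 p.1 * gext g4 3 p.2 := by
    rw [Finset.mul_sum, ← Finset.sum_sub_distrib]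
    exact Finset.sum_congr rfl fun p _ => by ring
  rw [hsplit] at hL
  linarith

/-! ### Parity classes of points -/

/-- The number of points of `Q N` with `X`, `Y`, `Z` odd. -/
noncomputable def TT (N : ℕ) : ℤ :=
  ∑ v ∈ Q N, if v.1 % 2 = 1 ∧ v.2.1 % 2 = 1 ∧ v.2.2.1 % 2 = 1 then (1 : ℤ) else 0

/-- The number of points of `Q N` with `Z` odd and `X`, `Y`, `W` even. -/
noncomputable def PP (N : ℕ) : ℤ :=
  ∑ v ∈ Q N, if v.1 % 2 = 0 ∧ v.2.1 % 2 = 0 ∧ v.2.2.1 % 2 = 1 ∧ v.2.2.2 % 2 = 0 then (1 : ℤ) else 0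

/-- The number of points of `Q N` with `Z` odd, `X`, `Y` even and `W ≡ 2 (mod 4)`. -/
noncomputable def UU (N : ℕ) : ℤ :=
  ∑ v ∈ Q N, if v.1 % 2 = 0 ∧ v.2.1 % 2 = 0 ∧ v.2.2.1 % 2 = 1 ∧ v.2.2.2 % 4 = 2 then (1 : ℤ) else 0

/-- The sum of `(-1)^((Z-1)/2) Z` over the representations `N = X² + 3Z²`. -/
noncomputable def DD (N : ℕ) : ℤ := ∑ v ∈ rep 3 N, chi4 (v.2 : ZMod 4) * v.2

/-- Modulo `8`, a point with `X ≡ Y (mod 2)` has either `X`, `Y` odd and exactly one of `Z`, `W` odd, or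
`X`, `Y` even and exactly one of `Z`, `W` odd. -/
lemma hh_split (N : ℕ) (hN : N % 8 = 3) : hh N = 2 * (PP N + TT N) := by
  have hT := Q_swapZW N (fun x y z _ => if x % 2 = 1 ∧ y % 2 = 1 ∧ z % 2 = 1 then (1 : ℤ) else 0)
  have hP := Q_swapZW N (fun x y z w =>
    if x % 2 = 0 ∧ y % 2 = 0 ∧ z % 2 = 1 ∧ w % 2 = 0 then (1 : ℤ) else 0)
  have e : 2 * (PP N + TT N) = (PP N + TT N) + (PP N + TT N) := by ring
  rw [e]
  nth_rw 1 [PP, TT]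
  rw [hT, hP, PP, TT, hh, ← Finset.sum_add_distrib, ← Finset.sum_add_distrib,
    ← Finset.sum_add_distrib]
  refine Finset.sum_congr rfl ?_
  rintro ⟨X, Y, Z, W⟩ h
  rw [mem_Q] at h
  have e1 := sq_mod8 X
  have e2 := sq_mod8 Y
  have e3 := sq_mod8 Z
  have e4 := sq_mod8 W
  dsimp only
  rcases Int.emod_two_eq_zero_or_one X with p1 | p1 <;>
  rcases Int.emod_two_eq_zero_or_one Y with p2 | p2 <;>
  rcases Int.emod_two_eq_zero_or_one Z with p3 | p3 <;>
  rcases Int.emod_two_eq_zero_or_one W with p4 | p4 <;>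
  rw [p1] at e1 <;> rw [p2] at e2 <;> rw [p3] at e3 <;> rw [p4] at e4 <;>
  rw [p1, p2, p3, p4] <;> norm_num at e1 e2 e3 e4 ⊢ <;> omega

/-- For fixed `Z`, `W` with `Z` odd and `W ≡ 2 (mod 4)`, the value of `X² + 3Y²` is `4m` with `m` odd, which
has twice as many odd representations as even ones. -/
lemma TT_eq (N : ℕ) (hN : N % 8 = 3) : TT N = 2 * UU N := by
  have hT := Q_conv N (fun x _ => if x % 2 = 1 then (1 : ℤ) else 0)
    (fun z w => if z % 2 = 1 ∧ w % 4 = 2 then (1 : ℤ) else 0)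
  have hU := Q_conv N (fun x _ => if x % 2 = 0 then (1 : ℤ) else 0)
    (fun z w => if z % 2 = 1 ∧ w % 4 = 2 then (1 : ℤ) else 0)
  have hT' : TT N = ∑ v ∈ Q N, (if v.1 % 2 = 1 then (1 : ℤ) else 0) *
      (if v.2.2.1 % 2 = 1 ∧ v.2.2.2 % 4 = 2 then (1 : ℤ) else 0) := by
    refine Finset.sum_congr rfl ?_
    rintro ⟨X, Y, Z, W⟩ h
    rw [mem_Q] at h
    have e1 := sq_mod8 X
    have e2 := sq_mod8 Y
    have e3 := sq_mod8 Z
    have e4 := sq_mod8 W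
    dsimp only
    rw [ite_zero_mul_ite_zero, mul_one]
    refine if_congr ⟨?_, ?_⟩ rfl rfl
    · rintro ⟨p1, p2, p3⟩
      rw [if_pos p1] at e1
      rw [if_pos p2] at e2
      rw [if_pos p3] at e3
      split_ifs at e4 <;> omega
    · rintro ⟨p1, p3, p4⟩
      rw [if_pos p1] at e1
      rw [if_pos p3] at e3
      rw [if_neg (by omega), if_pos p4] at e4
      split_ifs at e2 <;> omega
  have hU' : UU N = ∑ v ∈ Q N, (if v.1 % 2 = 0 then (1 : ℤ) else 0) *
      (if v.2.2.1 % 2 = 1 ∧ v.2.2.2 % 4 = 2 then (1 : ℤ) else 0) := by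
    refine Finset.sum_congr rfl ?_
    rintro ⟨X, Y, Z, W⟩ h
    rw [mem_Q] at h
    have e1 := sq_mod8 X
    have e2 := sq_mod8 Y
    have e3 := sq_mod8 Z
    have e4 := sq_mod8 W
    dsimp only
    rw [ite_zero_mul_ite_zero, mul_one]
    refine if_congr ⟨fun h => ⟨h.1, h.2.2⟩, ?_⟩ rfl rfl
    rintro ⟨p1, p3, p4⟩
    rw [if_neg (by omega)] at e1
    rw [if_pos p3] at e3
    rw [if_neg (by omega), if_pos p4] at e4
    refine ⟨p1, ?_, p3, p4⟩
    split_ifs at e1 e2 <;> omega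
  rw [hT', hU', hT, hU, Finset.mul_sum]
  refine Finset.sum_congr rfl ?_
  rintro ⟨a, b⟩ h
  rw [Finset.HasAntidiagonal.mem_antidiagonal] at h
  dsimp only at h ⊢
  by_cases hb : a % 8 = 4
  · obtain ⟨m, rfl⟩ : ∃ m, a = 4 * m := ⟨a / 4, by omega⟩
    have hm : Odd m := Nat.odd_iff.2 (by omega)
    have h1 := rot m hm (fun _ _ => 1)
    have h2 := even_part m (fun _ _ => 1)
    rw [Finset.sum_add_distrib, ← r_eq_sum, Finset.sum_filter] at h1
    rw [← r_eq_sum, Finset.sum_filter] at h2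
    rw [h1, h2]; ring
  · have : gext (fun k => ∑ v ∈ rep 1 k, if v.1 % 2 = 1 ∧ v.2 % 4 = 2 then (1 : ℤ) else 0) 3 b
        = 0 := by
      rw [gext]
      split_ifs with h3
      · refine Finset.sum_eq_zero ?_
        rintro ⟨z, w⟩ hv
        rw [mem_rep one_pos] at hv
        refine if_neg ?_
        dsimp only
        rintro ⟨h4, h5⟩
        have e3 := sq_mod8 z
        have e4 := sq_mod8 w
        rw [if_pos h4] at e3
        rw [if_neg (by omega), if_pos h5] at e4
        omega
      · rfl
    rw [this]; ring

/-- The signed count of the points of `Q N` with `Z` odd, `X`, `Y`, `W` even, `Y ≡ W (mod 4)`. -/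
lemma signed_eq (N : ℕ) (hN : N % 8 = 3) :
    (∑ v ∈ Q N, if v.1 % 2 = 0 ∧ v.2.1 % 2 = 0 ∧ v.2.2.1 % 2 = 1 ∧ v.2.2.2 % 2 = 0 ∧
      v.2.1 % 4 = v.2.2.2 % 4 then sg (v.2.1 / 2) else 0) = DD N := by
  set XS : Finset ℤ := (Finset.Icc (-(N : ℤ)) N).filter fun X => X % 4 = 0 ∧ 3 ∣ N - X ^ 2 with hXS
  have hM (X : ℤ) (hX : X ∈ XS) : 3 * ((N - X ^ 2) / 3) = N - X ^ 2 ∧ ((N - X ^ 2) / 3) % 8 = 1 := by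
    rw [hXS, Finset.mem_filter] at hX
    have e1 := sq_mod8 X
    rw [if_neg (by omega), if_neg (by omega)] at e1
    omega
  have hD : DD N = ∑ X ∈ XS, ∑ Z ∈ (Finset.Icc (-(N : ℤ)) N).filter
      (fun Z => Z ^ 2 = (N - X ^ 2) / 3), chi4 (Z : ZMod 4) * Z := by
    rw [Finset.sum_sigma', DD]
    refine Finset.sum_nbij' (fun v => ⟨v.1, v.2⟩) (fun v => (v.1, v.2)) ?_ ?_ ?_ ?_ ?_
    · rintro ⟨X, Z⟩ h
      have hb := h
      simp only [rep, Finset.mem_filter, Finset.mem_product] at hb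
      rw [mem_rep three_pos] at h
      simp only [Finset.mem_sigma, Finset.mem_filter, hXS]
      have e1 := sq_mod8 X
      have e2 := sq_mod8 Z
      refine ⟨⟨hb.1.1, ?_, ?_⟩, hb.1.2, ?_⟩
      · split_ifs at e1 e2 <;> omega
      · omega
      · omega
    · rintro ⟨X, Z⟩ h
      rw [Finset.mem_sigma] at h
      have := hM X h.1
      simp only [Finset.mem_filter] at h
      rw [mem_rep three_pos]
      dsimp only at h this ⊢
      omega
    · rintro ⟨X, Z⟩ h; rfl
    · rintro ⟨X, Z⟩ h; rfl
    · rintro ⟨X, Z⟩ h; rfl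
  have hL (X : ℤ) (hX : X ∈ XS) := L3 ((N - X ^ 2) / 3) N (hM X hX).2 (by
    have := (hM X hX).1; have := sq_nonneg X; omega)
  rw [hD, ← Finset.sum_congr rfl hL, ← Finset.sum_filter]
  have hr (X : ℤ) : ∑ Z ∈ oddBox ((N - X ^ 2) / 3) N, sg (((N - X ^ 2) / 3 - Z ^ 2) / 8) *
      r 1 (((N - X ^ 2) / 3 - Z ^ 2) / 8).toNat =
      ∑ Z ∈ oddBox ((N - X ^ 2) / 3) N, ∑ _v ∈ rep 1 (2 * (((N - X ^ 2) / 3 - Z ^ 2) / 8).toNat),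
        sg (((N - X ^ 2) / 3 - Z ^ 2) / 8) := by
    refine Finset.sum_congr rfl fun Z _ => ?_
    rw [← r1_two, Finset.sum_const, r, nsmul_eq_mul, mul_comm]
  simp only [hr]
  simp only [Finset.sum_sigma']
  refine Finset.sum_nbij' (fun v => ⟨v.1, v.2.2.1, (v.2.1 / 2, v.2.2.2 / 2)⟩)
    (fun w => (w.1, 2 * w.2.2.1, w.2.1, 2 * w.2.2.2)) ?_ ?_ ?_ ?_ ?_
  · rintro ⟨X, Y, Z, W⟩ h
    rw [Finset.mem_filter] at h
    have hb := h.1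
    simp only [Q, Finset.mem_filter, Finset.mem_product, Finset.mem_Icc] at hb
    rw [mem_Q] at h
    obtain ⟨h0, h1, h2, h3, h4, h5⟩ := h
    dsimp only at h1 h2 h3 h4 h5
    have e1 := sq_mod8 X
    have e2 := sq_mod8 Y
    have e3 := sq_mod8 Z
    have e4 := sq_mod8 W
    have hX4 : X % 4 = 0 := by split_ifs at * <;> omega
    have hXm : X ∈ XS := by
      rw [hXS, Finset.mem_filter, Finset.mem_Icc]
      exact ⟨by omega, hX4, by omega⟩
    have hq := hM X hXm
    have hk := odd_sq_div h3 hq.2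
    obtain ⟨y, rfl⟩ : ∃ y, Y = 2 * y := ⟨Y / 2, by omega⟩
    obtain ⟨w, rfl⟩ : ∃ w, W = 2 * w := ⟨W / 2, by omega⟩
    simp only [Finset.mem_sigma, oddBox, Finset.mem_filter, Finset.mem_Icc, mem_rep one_pos]
    rw [mul_pow, mul_pow] at h0
    have hy := sq_nonneg y
    have hw := sq_nonneg w
    refine ⟨hXm, ⟨⟨?_, ?_⟩, h3, ?_⟩, ?_⟩
    · omega
    · omega
    · omega
    · rw [Int.mul_ediv_cancel_left _ two_ne_zero, Int.mul_ediv_cancel_left _ two_ne_zero]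
      push_cast
      omega
  · rintro ⟨X, Z, y, w⟩ h
    simp only [Finset.mem_sigma, oddBox, Finset.mem_filter, mem_rep one_pos] at h
    obtain ⟨hX, ⟨-, h1, h2⟩, h3⟩ := h
    have hq := hM X hX
    have hk := odd_sq_div h1 hq.2
    rw [hXS, Finset.mem_filter] at hX
    dsimp only
    rw [Finset.mem_filter, mem_Q]
    push_cast at h3
    have hyw : y % 2 = w % 2 := by
      rcases Int.even_or_odd' y with ⟨y', h1 | h1⟩ <;> rcases Int.even_or_odd' w with ⟨w', h2 | h2⟩ <;>
        first | omega | (rw [h1, h2] at h3; ring_nf at h3; omega)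
    refine ⟨?_, ?_, ?_, h1, ?_, ?_⟩
    · rw [mul_pow, mul_pow]; omega
    all_goals dsimp only; omega
  · rintro ⟨X, Y, Z, W⟩ h
    rw [Finset.mem_filter] at h
    obtain ⟨h0, h1, h2, h3, h4, h5⟩ := h
    dsimp only at h1 h2 h3 h4 h5
    refine Prod.ext rfl (Prod.ext ?_ (Prod.ext rfl ?_)) <;> dsimp only <;> omega
  · rintro ⟨X, Z, y, w⟩ h
    simp
  · rintro ⟨X, Y, Z, W⟩ h
    rw [Finset.mem_filter, mem_Q] at h
    obtain ⟨h0, h1, h2, h3, h4, h5⟩ := h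
    dsimp only at h1 h2 h3 h4 h5 ⊢
    have e1 := sq_mod8 X
    have e3 := sq_mod8 Z
    rw [if_pos h3] at e3
    obtain ⟨y, rfl⟩ : ∃ y, Y = 2 * y := ⟨Y / 2, by omega⟩
    obtain ⟨w, rfl⟩ : ∃ w, W = 2 * w := ⟨W / 2, by omega⟩
    rw [mul_pow, mul_pow] at h0
    rw [Int.mul_ediv_cancel_left _ two_ne_zero]
    have hk : (((N : ℤ) - X ^ 2) / 3 - Z ^ 2) / 8 * 2 = y ^ 2 + w ^ 2 := by
      have : y ^ 2 % 2 = w ^ 2 % 2 := by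
        rcases Int.even_or_odd' y with ⟨y', h1 | h1⟩ <;>
        rcases Int.even_or_odd' w with ⟨w', h2 | h2⟩ <;>
        first | omega | (rw [h1, h2]; ring_nf; omega)
      omega
    have hpar : ((((N : ℤ) - X ^ 2) / 3 - Z ^ 2) / 8) % 2 = y % 2 := by
      generalize (((N : ℤ) - X ^ 2) / 3 - Z ^ 2) / 8 = k at hk ⊢
      rcases Int.even_or_odd' y with ⟨y', h1 | h1⟩ <;>
      rcases Int.even_or_odd' w with ⟨w', h2 | h2⟩ <;>
        first | omega | (have q1 := sq_mod8 y; have q2 := sq_mod8 w; split_ifs at q1 q2 <;> omega)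
    rw [sg, sg, hpar]

/-- Among the points counted by `PP`, counting `Y ≡ 2` and `W ≡ 2` modulo `4` by `UU` each leaves the
signed count of `signed_eq`. -/
lemma PP_sub (N : ℕ) (hN : N % 8 = 3) : PP N = DD N + 2 * UU N := by
  have hU := Q_swapYW N (fun x y z w =>
    if x % 2 = 0 ∧ y % 2 = 0 ∧ z % 2 = 1 ∧ w % 4 = 2 then (1 : ℤ) else 0)
  have e : DD N + 2 * UU N = DD N + (UU N + UU N) := by ring
  rw [e]
  nth_rw 1 [UU]
  rw [hU, UU, ← signed_eq N hN, PP, ← Finset.sum_add_distrib, ← Finset.sum_add_distrib]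
  refine Finset.sum_congr rfl ?_
  rintro ⟨X, Y, Z, W⟩ h
  dsimp only
  unfold sg
  split_ifs <;> omega

theorem TT_final (N : ℕ) (hN : N % 8 = 3) : 2 * TT N = E1 N - E2 N - DD N := by
  have h1 := hh_eq N hN
  have h2 := hh_split N hN
  have h3 := PP_sub N hN
  have h4 := TT_eq N hN
  linarith

/-! ### Triangular numbers and the shape of the formula -/

/-- Eight times a triangular number plus one is an odd square. -/
lemma odd_tri {x t : ℤ} (h : t = x * (x - 1) / 2) : 8 * t = (2 * x - 1) ^ 2 - 1 := by
  have h2 : 2 * (x * (x - 1) / 2) = x * (x - 1) :=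
    Int.mul_ediv_cancel' (by simpa using (Int.even_mul_pred_self x).two_dvd)
  rw [h]; linear_combination 4 * h2

lemma tquad_mem (n : ℕ) (x y z w : ℤ) :
    ((n : ℤ) = (1 : ℕ) * (x * (x - 1) / 2) + (3 : ℕ) * (y * (y - 1) / 2)
      + (3 : ℕ) * (z * (z - 1) / 2) + (12 : ℕ) * (w * (w - 1) / 2)) ↔
      (2 * x - 1, 2 * y - 1, 2 * z - 1, 2 * (2 * w - 1)) ∈ Q (8 * n + 19) := by
  rw [mem_Q]
  have hx := odd_tri (x := x) rfl
  have hy := odd_tri (x := y) rfl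
  have hz := odd_tri (x := z) rfl
  have hw := odd_tri (x := w) rfl
  rw [mul_pow]
  push_cast
  omega

/-- The substitution `X = 2x - 1`, `Y = 2y - 1`, `Z = 2z - 1`, `W = 2(2w - 1)` is onto the points with `X`,
`Y`, `Z` odd, because these have `W ≡ 2 (mod 4)`. -/
lemma tquad_eq (n : ℕ) : (tquad 1 3 3 12 n : ℤ) = TT (8 * n + 19) := by
  rw [TT, ← Finset.sum_filter, Finset.sum_const, nsmul_eq_mul, mul_one, tquad]
  congr 1
  rw [← Fintype.card_coe, ← Nat.card_eq_fintype_card]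
  have key (X Y Z W : ℤ) (h : (X, Y, Z, W) ∈ Q (8 * n + 19)) (h1 : X % 2 = 1)
      (h2 : Y % 2 = 1) (h3 : Z % 2 = 1) : W % 4 = 2 := by
    rw [mem_Q] at h
    have e1 := sq_mod8 X
    have e2 := sq_mod8 Y
    have e3 := sq_mod8 Z
    have e4 := sq_mod8 W
    rw [if_pos h1] at e1
    rw [if_pos h2] at e2
    rw [if_pos h3] at e3
    push_cast at h
    split_ifs at e4 <;> omega
  refine Nat.card_congr
    ⟨fun p => ⟨(2 * p.1.1 - 1, 2 * p.1.2.1 - 1, 2 * p.1.2.2.1 - 1, 2 * (2 * p.1.2.2.2 - 1)), ?_⟩,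
     fun v => ⟨((v.1.1 + 1) / 2, (v.1.2.1 + 1) / 2, (v.1.2.2.1 + 1) / 2, (v.1.2.2.2 + 2) / 4), ?_⟩,
     ?_, ?_⟩
  · obtain ⟨⟨x, y, z, w⟩, h⟩ := p
    rw [Finset.mem_filter]
    refine ⟨(tquad_mem n x y z w).1 h, ?_, ?_, ?_⟩ <;> dsimp only <;> omega
  · obtain ⟨⟨X, Y, Z, W⟩, h⟩ := v
    rw [Finset.mem_filter] at h
    obtain ⟨h, h1, h2, h3⟩ := h
    dsimp only at h1 h2 h3
    have h4 := key X Y Z W h h1 h2 h3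
    refine (tquad_mem n _ _ _ _).2 ?_
    dsimp only
    rw [show 2 * ((X + 1) / 2) - 1 = X by omega, show 2 * ((Y + 1) / 2) - 1 = Y by omega,
      show 2 * ((Z + 1) / 2) - 1 = Z by omega, show 2 * (2 * ((W + 2) / 4) - 1) = W by omega]
    exact h
  · rintro ⟨⟨x, y, z, w⟩, h⟩
    simp only [Subtype.mk.injEq, Prod.mk.injEq]
    omega
  · rintro ⟨⟨X, Y, Z, W⟩, h⟩
    rw [Finset.mem_filter] at h
    obtain ⟨h, h1, h2, h3⟩ := h
    dsimp only at h1 h2 h3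
    have h4 := key X Y Z W h h1 h2 h3
    simp only [Subtype.mk.injEq, Prod.mk.injEq]
    omega

lemma rep_neg_fst (D : ℤ) (hD : 0 < D) (n : ℕ) (f : ℤ → ℤ → ℤ) :
    ∑ v ∈ rep D n, f v.1 v.2 = ∑ v ∈ rep D n, f (-v.1) v.2 := by
  refine Finset.sum_nbij' (fun v => (-v.1, v.2)) (fun v => (-v.1, v.2)) ?_ ?_ ?_ ?_ ?_
  · rintro ⟨x, y⟩ h
    simp only [mem_rep hD, neg_sq] at h ⊢
    exact h
  · rintro ⟨x, y⟩ h
    simp only [mem_rep hD, neg_sq] at h ⊢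
    exact h
  all_goals intro v _; simp

/-- The summand `χ₄(A) A + χ₄(B) B`; it is even in each variable. -/
def ff (A B : ℤ) : ℤ := chi4 (A : ZMod 4) * A + chi4 (B : ZMod 4) * B

lemma ff_neg_left (A B : ℤ) : ff (-A) B = ff A B := by
  simp only [ff, Int.cast_neg, chi4_neg]; ring

lemma ff_neg_right (A B : ℤ) : ff A (-B) = ff A B := by
  simp only [ff, Int.cast_neg, chi4_neg]; ring

/-- `ff` is even in each variable, and the coordinates of an odd representation are nonzero. -/
lemma pos_sum (N : ℕ) :
    ∑ v ∈ (rep 3 (4 * N)).filter (fun v => v.1 % 2 = 1), ff v.1 v.2 =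
      4 * ∑ v ∈ (rep 3 (4 * N)).filter (fun v => v.1 % 2 = 1 ∧ 0 < v.1 ∧ 0 < v.2), ff v.1 v.2 := by
  have h1 := rep_conj_sum 3 three_pos (4 * N)
    (fun x y => if x % 2 = 1 ∧ 0 < x ∧ 0 < y then ff x y else 0)
  have h2 := rep_neg_fst 3 three_pos (4 * N)
    (fun x y => (if x % 2 = 1 ∧ 0 < x ∧ 0 < y then ff x y else 0) +
      if x % 2 = 1 ∧ 0 < x ∧ 0 < -y then ff x (-y) else 0)
  have h3 : ∑ v ∈ (rep 3 (4 * N)).filter (fun v => v.1 % 2 = 1), ff v.1 v.2 =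
      (∑ v ∈ rep 3 (4 * N), ((if v.1 % 2 = 1 ∧ 0 < v.1 ∧ 0 < v.2 then ff v.1 v.2 else 0) +
      if v.1 % 2 = 1 ∧ 0 < v.1 ∧ 0 < -v.2 then ff v.1 (-v.2) else 0)) +
      ∑ v ∈ rep 3 (4 * N), ((if -v.1 % 2 = 1 ∧ 0 < -v.1 ∧ 0 < v.2 then ff (-v.1) v.2 else 0) +
      if -v.1 % 2 = 1 ∧ 0 < -v.1 ∧ 0 < -v.2 then ff (-v.1) (-v.2) else 0) := by
    rw [Finset.sum_filter, ← Finset.sum_add_distrib]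
    refine Finset.sum_congr rfl ?_
    rintro ⟨x, y⟩ h
    rw [mem_rep three_pos] at h
    push_cast at h
    have := par3 h
    simp only [ff_neg_left, ff_neg_right]
    split_ifs <;> omega
  rw [h3, ← h2, Finset.sum_add_distrib, ← h1, Finset.sum_filter]
  ring

/-- The rotation by `1 + √-3`. As `N ≡ 3 (mod 8)`, a representation `N = X² + 3Y²` has `4 ∣ X`, so that
`X - 3Y ≡ X + Y ≡ Y (mod 4)`. -/
lemma pos_sum_eq (N : ℕ) (hN : N % 8 = 3) :
    ∑ v ∈ (rep 3 (4 * N)).filter (fun v => v.1 % 2 = 1 ∧ 0 < v.1 ∧ 0 < v.2), ff v.1 v.2 =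
      -DD N := by
  have h1 := pos_sum N
  rw [rot N (Nat.odd_iff.2 (by omega))] at h1
  have h2 := rep_conj_sum 3 three_pos N (fun x y => chi4 (y : ZMod 4) * x)
  have h3 : ∑ v ∈ rep 3 N, (ff (v.1 - 3 * v.2) (v.1 + v.2) + ff (v.1 - 3 * v.2) (-(v.1 + v.2))) =
      ∑ v ∈ rep 3 N, (4 * (chi4 (v.2 : ZMod 4) * v.1) + -4 * (chi4 (v.2 : ZMod 4) * v.2)) := by
    refine Finset.sum_congr rfl ?_
    rintro ⟨x, y⟩ h
    rw [mem_rep three_pos] at h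
    have e1 := sq_mod8 x
    have e2 := sq_mod8 y
    have hx : x % 4 = 0 := by split_ifs at e1 e2 <;> omega
    obtain ⟨k, rfl⟩ : ∃ k, x = 4 * k := ⟨x / 4, by omega⟩
    have c4 : (4 : ZMod 4) = 0 := rfl
    have c3 : (-3 : ZMod 4) = 1 := rfl
    rw [ff_neg_right]
    have f1 : ((4 * k - 3 * y : ℤ) : ZMod 4) = y := by
      push_cast; linear_combination (k - y) * c4
    have f2 : ((4 * k + y : ℤ) : ZMod 4) = y := by
      push_cast; linear_combination k * c4
    simp only [ff, f1, f2]
    ring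
  rw [h3, Finset.sum_add_distrib, ← Finset.mul_sum, ← Finset.mul_sum] at h1
  simp only [Int.cast_neg, chi4_neg, neg_mul, Finset.sum_neg_distrib] at h2 h1
  rw [DD]
  omega

lemma sign_chi4 {a : ℕ} (h : Odd a) : (-1 : ℚ) ^ ((a - 1) / 2) = (chi4 (a : ZMod 4) : ℤ) := by
  obtain ⟨k, rfl⟩ := h
  rw [show (2 * k + 1 - 1) / 2 = k by omega, chi4_cast]
  rcases Nat.even_or_odd' k with ⟨j, rfl | rfl⟩
  · rw [if_pos (by omega)]; simp
  · rw [if_neg (by omega), if_pos (by omega)]; simp [pow_succ]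

lemma finsum_eq (n : ℕ) :
    ∑ᶠ (a : ℕ) (b : ℕ)
          (_ : 0 < a ∧ 0 < b ∧ Odd a ∧ Odd b ∧ 4 * (8 * n + 19) = a ^ 2 + 3 * b ^ 2),
          ((-1 : ℚ) ^ ((a - 1) / 2) * a + (-1 : ℚ) ^ ((b - 1) / 2) * b) =
      ((-DD (8 * n + 19) : ℤ) : ℚ) := by
  rw [← pos_sum_eq _ (by omega)]
  set N := 8 * n + 19 with hN
  simp only [finsum_eq_if]
  have bd (a b : ℕ) (h : 4 * N = a ^ 2 + 3 * b ^ 2) :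
      a ∈ Finset.range (4 * N + 1) ∧ b ∈ Finset.range (4 * N + 1) := by
    rw [Finset.mem_range, Finset.mem_range]
    constructor <;> nlinarith [Nat.le_self_pow two_ne_zero a, Nat.le_self_pow two_ne_zero b]
  have inner (a : ℕ) : (∑ᶠ b : ℕ,
      if 0 < a ∧ 0 < b ∧ Odd a ∧ Odd b ∧ 4 * N = a ^ 2 + 3 * b ^ 2 then
        ((-1 : ℚ) ^ ((a - 1) / 2) * a + (-1 : ℚ) ^ ((b - 1) / 2) * b) else 0) =
      ∑ b ∈ Finset.range (4 * N + 1),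
        if 0 < a ∧ 0 < b ∧ Odd a ∧ Odd b ∧ 4 * N = a ^ 2 + 3 * b ^ 2 then
        ((-1 : ℚ) ^ ((a - 1) / 2) * a + (-1 : ℚ) ^ ((b - 1) / 2) * b) else 0 := by
    refine finsum_eq_sum_of_support_subset _ fun b hb => ?_
    rw [Function.mem_support, ne_eq, ite_eq_right_iff, Classical.not_imp] at hb
    exact (bd a b hb.1.2.2.2.2).2
  simp only [inner]
  rw [finsum_eq_sum_of_support_subset (s := Finset.range (4 * N + 1)), ← Finset.sum_product',
    ← Finset.sum_filter]
  · push_cast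
    refine Finset.sum_nbij' (fun v => ((v.1 : ℤ), (v.2 : ℤ))) (fun v => (v.1.toNat, v.2.toNat))
      ?_ ?_ ?_ ?_ ?_
    · rintro ⟨a, b⟩ h
      obtain ⟨-, h1, h2, h3, h4, h5⟩ := Finset.mem_filter.1 h
      dsimp only at h1 h2 h3 h4 h5
      rw [Finset.mem_filter, mem_rep three_pos]
      have := Nat.odd_iff.1 h3
      zify at h5
      push_cast
      exact ⟨h5.symm, by omega, by omega, by omega⟩
    · rintro ⟨a, b⟩ h
      rw [Finset.mem_filter, mem_rep three_pos] at h
      obtain ⟨h0, h1, h2, h3⟩ := h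
      dsimp only at h1 h2 h3
      lift a to ℕ using h2.le
      lift b to ℕ using h3.le
      have hp := par3 (by push_cast at h0; exact h0)
      simp only [Int.toNat_natCast]
      have h0' : 4 * N = a ^ 2 + 3 * b ^ 2 := by exact_mod_cast h0.symm
      refine Finset.mem_filter.2 ⟨Finset.mem_product.2 (bd a b h0'), by dsimp only; omega,
        by dsimp only; omega, Nat.odd_iff.2 (by dsimp only; omega),
        Nat.odd_iff.2 (by dsimp only; omega), h0'⟩
    · rintro ⟨a, b⟩ h; simp
    · rintro ⟨a, b⟩ h
      rw [Finset.mem_filter] at h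
      obtain ⟨h0, h1, h2, h3⟩ := h
      dsimp only at h2 h3 ⊢
      rw [Int.toNat_of_nonneg h2.le, Int.toNat_of_nonneg h3.le]
    · rintro ⟨a, b⟩ h
      obtain ⟨-, h1, h2, h3, h4, h5⟩ := Finset.mem_filter.1 h
      dsimp only at h3 h4 ⊢
      rw [sign_chi4 h3, sign_chi4 h4, ff]
      push_cast
      rfl
  · intro a ha
    rw [Function.mem_support] at ha
    obtain ⟨b, -, hb⟩ := Finset.exists_ne_zero_of_sum_ne_zero ha
    rw [ne_eq, ite_eq_right_iff, Classical.not_imp] at hb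
    exact (bd a b hb.1.2.2.2.2).1

lemma jacobi_chi {d : ℕ} (hd : Odd d) : jacobiSym 3 d = chi3 d * chi4 d := by
  rw [jacobiSym.mod_right _ hd, chi3_cast, chi4_cast]
  have : d % 12 = 1 ∨ d % 12 = 3 ∨ d % 12 = 5 ∨ d % 12 = 7 ∨ d % 12 = 9 ∨ d % 12 = 11 := by
    obtain ⟨k, rfl⟩ := hd; omega
  have e3 : d % 3 = (d % 12) % 3 := by omega
  have e4 : d % 4 = (d % 12) % 4 := by omega
  rw [e3, e4]
  rcases this with h | h | h | h | h | h <;> simp [h] <;> norm_num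

lemma dvd_of_not_three {β n₁ d : ℕ} (hd : d ∣ 3 ^ β * n₁) (h3 : ¬ 3 ∣ d) : d ∣ n₁ :=
  (Nat.Coprime.pow_right β ((Nat.Prime.coprime_iff_not_dvd Nat.prime_three).2 h3).symm).dvd_of_dvd_mul_left hd

lemma chi3_eq_zero {d : ℕ} (h : 3 ∣ d) : chi3 (d : ZMod 3) = 0 := by
  rw [chi3_cast, if_neg (by omega), if_neg (by omega)]

/-- `chi3` kills the divisors that are multiples of `3`. -/
lemma sum_three_free {β n₁ : ℕ} (hn : n₁ ≠ 0) (f : ℕ → ℤ) :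
    ∑ d ∈ (3 ^ β * n₁).divisors, f d * (chi3 d * chi4 d) =
      ∑ d ∈ n₁.divisors, f d * (chi3 d * chi4 d) := by
  symm
  refine Finset.sum_subset (Nat.divisors_subset_of_dvd (by positivity) (Dvd.intro_left _ rfl)) ?_
  intro d hd hd'
  rw [Nat.mem_divisors] at hd
  rw [chi3_eq_zero]
  · ring
  · by_contra h
    exact hd' (Nat.mem_divisors.2 ⟨dvd_of_not_three hd.1 h, hn⟩)

lemma E2_eq {β n₁ : ℕ} (hn : n₁ ≠ 0) :
    E2 (3 ^ β * n₁) = ∑ d ∈ n₁.divisors, (d : ℤ) * (chi3 d * chi4 d) := by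
  rw [E2, Nat.sum_divisorsAntidiagonal' (fun _ d => (d : ℤ) * (chi3 d * chi4 d)), sum_three_free hn]

/-- Substitute `d ↦ n₁/d` and use `χ(n₁/d) = χ(n₁) χ(d)` for `d` prime to `6`. -/
lemma E1_eq {β n₁ : ℕ} (hn : Odd n₁) (h3 : ¬ 3 ∣ n₁) :
    E1 (3 ^ β * n₁) = 3 ^ β * (chi3 n₁ * chi4 n₁) *
      ∑ d ∈ n₁.divisors, (d : ℤ) * (chi3 d * chi4 d) := by
  have hn0 : n₁ ≠ 0 := hn.pos.ne'
  rw [E1, Nat.sum_divisorsAntidiagonal (fun d e => (e : ℤ) * (chi3 d * chi4 d)),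
    sum_three_free hn0 (fun d => ((3 ^ β * n₁ / d : ℕ) : ℤ)),
    ← Nat.sum_div_divisors n₁, Finset.mul_sum]
  refine Finset.sum_congr rfl fun d hd => ?_
  obtain ⟨⟨e, rfl⟩, -⟩ := Nat.mem_divisors.1 hd
  have hd0 : 0 < d := Nat.pos_of_ne_zero (by rintro rfl; simp at hn0)
  have he0 : 0 < e := Nat.pos_of_ne_zero (by rintro rfl; simp at hn0)
  rw [Nat.mul_div_cancel_left _ hd0, show 3 ^ β * (d * e) = 3 ^ β * d * e by ring,
    Nat.mul_div_cancel _ he0]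
  obtain ⟨-, ho⟩ := Nat.odd_mul.1 hn
  have hd1 : Odd d := (Nat.odd_mul.1 hn).1
  have s4 : chi4 (d : ZMod 4) ^ 2 = 1 := by
    rcases od4 hd1 with h | h <;> rw [h] <;> decide
  have s3 : chi3 (d : ZMod 3) ^ 2 = 1 := by
    have : ¬ 3 ∣ d := fun h => h3 (h.mul_right e)
    rw [chi3_cast]
    split_ifs <;> omega
  push_cast
  rw [chi3_mul, chi4_mul]
  linear_combination (-3 ^ β * d * chi3 e * chi4 e) * s3 + (-3 ^ β * d * chi3 e * chi4 e) * chi3 d ^ 2 * s4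

end Stmt15

theorem stmt_15 (n : ℕ) (hn : 0 < n) (β n₁ : ℕ) (hn₁ : 0 < n₁) (h3 : ¬ 3 ∣ n₁)
    (hfac : 8 * n + 19 = 3 ^ β * n₁) :
    (tquad 1 3 3 12 n : ℚ) =
      1 / 2 * ((3 : ℚ) ^ β * jacobiSym 3 n₁ - 1) *
          ∑ d ∈ n₁.divisors, (d : ℚ) * jacobiSym 3 d +
        1 / 2 * ∑ᶠ (a : ℕ) (b : ℕ)
          (_ : 0 < a ∧ 0 < b ∧ Odd a ∧ Odd b ∧ 4 * (8 * n + 19) = a ^ 2 + 3 * b ^ 2),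
          ((-1 : ℚ) ^ ((a - 1) / 2) * a + (-1 : ℚ) ^ ((b - 1) / 2) * b) := by
  have ho : Odd n₁ := by
    have : Odd (3 ^ β * n₁) := hfac ▸ ⟨4 * n + 9, by ring⟩
    exact (Nat.odd_mul.1 this).2
  have hS : ∑ d ∈ n₁.divisors, (d : ℚ) * jacobiSym 3 d =
      ((∑ d ∈ n₁.divisors, (d : ℤ) * (Stmt15.chi3 d * Stmt15.chi4 d) : ℤ) : ℚ) := by
    push_cast
    refine Finset.sum_congr rfl fun d hd => ?_
    rw [Stmt15.jacobi_chi (ho.of_dvd_nat (Nat.dvd_of_mem_divisors hd))]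
    push_cast
    rfl
  have hT := Stmt15.TT_final (8 * n + 19) (by omega)
  rw [← Stmt15.tquad_eq] at hT
  have hE1 := congrArg Stmt15.E1 hfac
  have hE2 := congrArg Stmt15.E2 hfac
  rw [Stmt15.E1_eq ho h3] at hE1
  rw [Stmt15.E2_eq hn₁.ne'] at hE2
  rw [hE1, hE2] at hT
  rw [hS, Stmt15.finsum_eq, Stmt15.jacobi_chi ho]
  have hT' := congrArg (Int.cast : ℤ → ℚ) hT
  push_cast at hT' ⊢
  linear_combination hT' / 2
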